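/- For any f ∈ Ḣ¹_⋄, T > 0, ν > 0 and B > 0, there exists a constant C = C(ν, T, ‖f‖_{Ḣ¹}, B) > 0 such that for all θ, θ₀ ∈ Ḣ²_⋄ with ‖θ‖_{Ḣ²} + ‖θ₀‖_{Ḣ²} ≤ B, the corresponding solutions u_θ, u_{θ₀} of the periodic 2D Navier–Stokes equations satisfy the stability (inverse-continuity) estimate ‖θ − θ₀‖²_{Ḣ^{−1}} ≤ C ∫₀ᵀ ‖u_θ(t) − u_{θ₀}(t)‖²_{L²} dt. -/

import Mathlib

open MeasureTheory Set
open scoped BigOperators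

noncomputable section

namespace NS2D

/-- Nonzero Fourier frequencies of the 2D torus `Ω = 𝕋²`. -/
def Freq : Type := {k : ℤ × ℤ // k ≠ 0}

/-- Squared Euclidean modulus `|k|²` of a frequency. -/
def knormSq (k : Freq) : ℝ := (k.1.1 : ℝ) ^ 2 + (k.1.2 : ℝ) ^ 2

/-- Eigenvalue `λ_k = 4π²|k|²` of the periodic Laplacian `−Δ`. -/
def lam (k : Freq) : ℝ := 4 * Real.pi ^ 2 * knormSq k

/-- A divergence-free mean-zero vector field `u ∈ Ḣ_⋄` (or, more generally, an
element of the scale `Ḣ^α_⋄`) on the torus is represented by its Fourier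
coefficients `c k` along the orthonormal basis
`e_k(x) = |k|⁻¹ (k₂, −k₁) exp(2πi k·x)` of divergence-free fields. -/
abbrev Coef : Type := Freq → ℂ

/-- Negation of a frequency. -/
def fneg (k : Freq) : Freq := ⟨-k.1, neg_ne_zero.mpr k.2⟩

/-- The conjugacy condition expressing that the coefficients `c` represent a
real-valued vector field (note `e_{−k} = − conj e_k`). -/
def IsReal (c : Coef) : Prop := ∀ k, c (fneg k) = - (starRingEnd ℂ) (c k)

/-- Squared homogeneous Sobolev norm `‖·‖²_{Ḣ^α} = Σ_k λ_k^α |c k|²`. -/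
def hSq (α : ℝ) (c : Coef) : ℝ := ∑' k, lam k ^ α * ‖c k‖ ^ 2

/-- Homogeneous Sobolev norm `‖·‖_{Ḣ^α}`. -/
def hN (α : ℝ) (c : Coef) : ℝ := Real.sqrt (hSq α c)

/-- Finiteness of the `Ḣ^α`-norm. -/
def FinH (α : ℝ) (c : Coef) : Prop := Summable fun k => lam k ^ α * ‖c k‖ ^ 2

/-- Membership in `Ḣ^α_⋄` (real-valued field with finite `Ḣ^α`-norm). -/
def MemH (α : ℝ) (c : Coef) : Prop := IsReal c ∧ FinH α c

/-- Membership in `Ḣ^∞_⋄ = C^∞(Ω)² ∩ Ḣ_⋄`: all Sobolev norms are finite. -/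
def MemHinf (c : Coef) : Prop := ∀ α : ℝ, MemH α c

/-- Real `Ḣ^α` inner product `⟨·,·⟩_{Ḣ^α}` (for real-valued fields). -/
def hInner (α : ℝ) (c d : Coef) : ℝ := ∑' k, lam k ^ α * (c k * (starRingEnd ℂ) (d k)).re

/-- The `L²` inner product. -/
def innerC (c d : Coef) : ℂ := ∑' k, c k * (starRingEnd ℂ) (d k)

/-- The unit vector `(k₂, −k₁)/|k|` spanning the divergence-free direction at
frequency `k`. -/
def evec (k : Freq) : ℝ × ℝ :=
  ((k.1.2 : ℝ) / Real.sqrt (knormSq k), -((k.1.1 : ℝ)) / Real.sqrt (knormSq k))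

/-- Euclidean dot product on `ℝ²`. -/
def dotR (a b : ℝ × ℝ) : ℝ := a.1 * b.1 + a.2 * b.2

/-- A frequency as a real vector. -/
def fvec (k : Freq) : ℝ × ℝ := ((k.1.1 : ℝ), (k.1.2 : ℝ))

/-- Fourier coefficients (along the basis `e_k`) of the Leray-projected
transport nonlinearity `B[u,v] = P[(u·∇)v]`:
`(B[u,v])^(k) · ē_k = 2πi Σ_{m+n=k, n≠0} c_m d_n (e_m·n)(e_n·e_k)`. -/
def Bc (c d : Coef) : Coef := fun k =>
  (((2 * Real.pi : ℝ) : ℂ) * Complex.I) *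
    ∑' m : Freq,
      if h : k.1 - m.1 ≠ 0 then
        c m * d ⟨k.1 - m.1, h⟩ *
          (((dotR (evec m) (fvec ⟨k.1 - m.1, h⟩) *
            dotR (evec ⟨k.1 - m.1, h⟩) (evec k) : ℝ)) : ℂ)
      else 0

/-- The Laplacian `Δ` acting on the scale: `(Δu)^(k) = −λ_k û(k)`. -/
def lapC (c : Coef) : Coef := fun k => -((lam k : ℝ) : ℂ) * c k

/-- Continuity of a trajectory `t ↦ u(t)`, `t ∈ [0,T]`, for the `Ḣ^α`-norm:
`u ∈ C([0,T], Ḣ^α_⋄)`. -/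
def ContH (α : ℝ) (T : ℝ) (u : ℝ → Coef) : Prop :=
  ∀ t ∈ Icc (0:ℝ) T, ∀ ε > 0, ∃ δ > 0, ∀ s ∈ Icc (0:ℝ) T,
    |s - t| < δ → hN α (u s - u t) < ε

/-- Membership `u ∈ L²([0,T], Ḣ^α_⋄)`. -/
def MemL2H (α : ℝ) (T : ℝ) (u : ℝ → Coef) : Prop :=
  (∀ t ∈ Ioc (0:ℝ) T, MemH α (u t)) ∧
    IntegrableOn (fun t => hSq α (u t)) (Ioc 0 T)

/-- `u` is a strong solution on `[0,T]` of the (Leray-projected) periodic 2D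
Navier–Stokes equations `du/dt + νAu + B[u,u] = f`, `u(0) = θ`, posed in `Ḣ_⋄`:
the Fourier coefficients satisfy the corresponding system of ODEs on `(0,T]`,
the trajectory is continuous into `Ḣ¹_⋄` (in particular at `t = 0`), and lies
in `L²([0,T], Ḣ²_⋄)`. -/
structure IsNSSol (ν : ℝ) (f : Coef) (T : ℝ) (θ : Coef) (u : ℝ → Coef) : Prop where
  init : u 0 = θ
  real : ∀ t ∈ Icc (0:ℝ) T, IsReal (u t)
  deriv : ∀ (k : Freq), ∀ t ∈ Ioc (0:ℝ) T,
    HasDerivAt (fun s => u s k)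
      (f k - ((ν * lam k : ℝ) : ℂ) * u t k - Bc (u t) (u t) k) t
  contH1 : ContH 1 T u
  memL2H2 : MemL2H 2 T u

/-- `U` solves the linear parabolic equation
`dU/dt − νΔU + B[u₀, U] + B[U, u₁] = g`, `U(0) = ξ`, on `[0,T]`. -/
structure IsLinPSol (ν : ℝ) (u₀ u₁ : ℝ → Coef) (g : ℝ → Coef) (T : ℝ) (ξ : Coef)
    (U : ℝ → Coef) : Prop where
  init : U 0 = ξ
  real : ∀ t ∈ Icc (0:ℝ) T, IsReal (U t)
  deriv : ∀ (k : Freq), ∀ t ∈ Ioc (0:ℝ) T,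
    HasDerivAt (fun s => U s k)
      (g t k - ((ν * lam k : ℝ) : ℂ) * U t k - Bc (u₀ t) (U t) k - Bc (U t) (u₁ t) k) t

/-- `U = 𝕀_θ[ξ]` solves the linearisation of Navier–Stokes along the
trajectory `u₀`: `dU/dt − νΔU + B[u₀,U] + B[U,u₀] = 0`, `U(0) = ξ`. -/
def IsLinSol (ν : ℝ) (u₀ : ℝ → Coef) (T : ℝ) (ξ : Coef) (U : ℝ → Coef) : Prop :=
  IsLinPSol ν u₀ u₀ (fun _ => 0) T ξ U

/-- The heat semigroup `S_t = e^{νtΔ}` on the scale `Ḣ^α_⋄`. -/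
def heatS (ν t : ℝ) (c : Coef) : Coef := fun k =>
  ((Real.exp (-(ν * lam k * t)) : ℝ) : ℂ) * c k

/-- Duhamel representation of the solution of the periodic heat equation
`du/dt − νΔu = g`, `u(0) = h`. -/
def heatSol (ν : ℝ) (g : ℝ → Coef) (h : Coef) : ℝ → Coef := fun t k =>
  ((Real.exp (-(ν * lam k * t)) : ℝ) : ℂ) *
    (h k + ∫ s in (0:ℝ)..t, ((Real.exp (ν * lam k * s) : ℝ) : ℂ) * g s k)

/-- Real-linearity of a map on the coefficient space. -/
def IsLinMap (Λ : Coef → Coef) : Prop :=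
  (∀ c d, Λ (c + d) = Λ c + Λ d) ∧ ∀ (r : ℝ) (c : Coef), Λ (r • c) = r • Λ c

/-- `Λ` defines a compact (linear) operator `Ḣ^α_⋄ → Ḣ^β_⋄`: it is linear,
maps `Ḣ^α_⋄` into `Ḣ^β_⋄`, and the image of the `Ḣ^α`-unit ball is totally
bounded for the `Ḣ^β`-norm. -/
def IsCompactOp (α β : ℝ) (Λ : Coef → Coef) : Prop :=
  IsLinMap Λ ∧ (∀ c, MemH α c → MemH β (Λ c)) ∧
    ∀ ε > 0, ∃ S : Finset Coef, ∀ c, MemH α c → hN α c ≤ 1 →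
      ∃ s ∈ S, hN β (Λ c - s) < ε

/-- The index `a* = |a|+1` if `|a| ≤ 1`, `a* = |a|` if `|a| ≥ 2`. -/
def astar (a : ℤ) : ℤ := if |a| ≤ 1 then |a| + 1 else |a|

/-- `i`-th component of the unit vector `evec k`. -/
def evecC (i : Fin 2) (k : Freq) : ℝ := if i = 0 then (evec k).1 else (evec k).2

/-- Fourier coefficients (over all of `ℤ²`) of the scalar component `u_i` of a
divergence-free field with coefficients `c`. -/
def compCoef (i : Fin 2) (c : Coef) : ℤ × ℤ → ℂ := fun n =>
  if h : n ≠ 0 then c ⟨n, h⟩ * ((evecC i ⟨n, h⟩ : ℝ) : ℂ) else 0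

/-- Convolution: Fourier coefficients of a pointwise product of two scalar
functions. -/
def convC (F G : ℤ × ℤ → ℂ) : ℤ × ℤ → ℂ := fun n => ∑' m : ℤ × ℤ, F m * G (n - m)

/-- Squared homogeneous Sobolev norm of a scalar function given by its Fourier
coefficients over `ℤ²`. -/
def hSqScalar (α : ℝ) (F : ℤ × ℤ → ℂ) : ℝ := ∑' k : Freq, lam k ^ α * ‖F k.1‖ ^ 2

/-- `‖u vᵀ‖²_{Ḣ^α} = Σ_{i,j=1}^2 ‖u_i v_j‖²_{Ḣ^α}`. -/
def hSqMat (α : ℝ) (c d : Coef) : ℝ :=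
  ∑ i : Fin 2, ∑ j : Fin 2, hSqScalar α (convC (compCoef i c) (compCoef j d))

/-- The character `exp(2πi k·x)`. -/
def efun (k : Freq) (x : ℝ × ℝ) : ℂ :=
  Complex.exp ((((2 * Real.pi : ℝ)) : ℂ) * Complex.I *
    ((k.1.1 : ℂ) * (x.1 : ℂ) + (k.1.2 : ℂ) * (x.2 : ℂ)))

/-- Pointwise evaluation of the `i`-th component of the field. -/
def evalComp (i : Fin 2) (c : Coef) (x : ℝ × ℝ) : ℂ :=
  ∑' k, c k * ((evecC i k : ℝ) : ℂ) * efun k x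

/-- Supremum norm (`C⁰`-norm) of the field. -/
def c0N (c : Coef) : ℝ := ⨆ x : ℝ × ℝ, max ‖evalComp 0 c x‖ ‖evalComp 1 c x‖

/-- The partial derivative `∂_j` acting on divergence-free fields. -/
def pderiv (j : Fin 2) (c : Coef) : Coef := fun k =>
  (((2 * Real.pi : ℝ) : ℂ) * Complex.I) *
    (if j = 0 then ((k.1.1 : ℤ) : ℂ) else ((k.1.2 : ℤ) : ℂ)) * c k

/-- `C¹`-norm of the field. -/
def c1N (c : Coef) : ℝ := c0N c + c0N (pderiv 0 c) + c0N (pderiv 1 c)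

/-- Norm of the multiplier space `B^ℓ`: `C^ℓ(Ω)²` for `ℓ ≤ 1` and `Ḣ^ℓ` for
`ℓ ≥ 2`. -/
def bN (ℓ : ℕ) (c : Coef) : ℝ :=
  if ℓ = 0 then c0N c else if ℓ = 1 then c1N c else hN (ℓ : ℝ) c

end NS2D

namespace NS2D

/-!
The estimate is a backward Gronwall inequality for the `Ḣ⁻¹` norm of `w = u - u₀`, which solves
`∂ₜw = -νAw - (B[u, w] + B[w, u₀])`. Transporting fields are divergence free, so the derivative in
the nonlinearity falls on the test function, and Young's inequality `ℓ¹ * ℓ² ⊆ ℓ²` for the Fourier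
coefficients, together with the embedding of `Ḣ²` into the absolutely convergent Fourier series,
gives
`∂ₜ‖w‖²_{Ḣ⁻¹} ≥ -(2ν + 1) ‖w‖²_{L²} - K (‖u‖²_{Ḣ²} + ‖u₀‖²_{Ḣ²}) ‖w‖²_{Ḣ⁻¹}`.
Hence `‖w(0)‖²_{Ḣ⁻¹}` is controlled by `‖w(t)‖²_{Ḣ⁻¹} + ∫₀ᵀ ‖w‖²_{L²}` for every `t`, and averaging
over `t` gives the claim, provided that `∫₀ᵀ ‖u‖²_{Ḣ²}` is bounded in terms of the data. This
is the enstrophy balance: in two dimensions `⟨Au, B[u, u]⟩ = 0`, because the interactions within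
each triad of frequencies with zero sum cancel.

All the differential inequalities are derived for sums over finitely many frequencies, where the
solutions are differentiable; only integrated inequalities are passed to the limit.
-/

section Convolution

lemma abs_le_sqrt_tsum_sq {ι : Type*} {y : ι → ℝ} (hy : Summable fun n => y n ^ 2) (n : ι) :
    |y n| ≤ √(∑' n, y n ^ 2) :=
  Real.abs_le_sqrt (hy.le_tsum n fun _ _ => sq_nonneg _)

variable {G ι : Type*} [AddCommGroup G] {x y z : G → ℝ}

lemma summable_mul_conv (hx : Summable x) (hy : Summable fun n => y n ^ 2) (k : G) :
    Summable fun m => x m * y (k - m) :=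
  .of_norm_bounded (hx.abs.mul_right √(∑' n, y n ^ 2)) fun m => by
    rw [norm_mul, Real.norm_eq_abs, Real.norm_eq_abs]
    gcongr
    exact abs_le_sqrt_tsum_sq hy _

lemma tsum_mul_sub_comm (k : G) : ∑' m, x m * y (k - m) = ∑' m, y m * x (k - m) := by
  rw [← (Equiv.subLeft k).tsum_eq]
  simp only [Equiv.subLeft_apply, sub_sub_cancel, mul_comm]

lemma summable_mul_sub_comm (k : G) :
    (Summable fun m => x m * y (k - m)) ↔ Summable fun m => y m * x (k - m) := by
  rw [← (Equiv.subLeft k).summable_iff]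
  simp only [Function.comp_def, Equiv.subLeft_apply, sub_sub_cancel, mul_comm]

lemma sum_mul_comp_sub_le (hy : Summable fun n => y n ^ 2) {κ : ι → G}
    (hκ : Function.Injective κ) (F : Finset ι) (w : ι → ℝ) (m : G) :
    ∑ i ∈ F, w i * y (κ i - m) ≤ √(∑' n, y n ^ 2) * √(∑ i ∈ F, w i ^ 2) := by
  have hinj : Function.Injective fun i => κ i - m := sub_left_injective.comp hκ
  have hle : ∑ i ∈ F, y (κ i - m) ^ 2 ≤ ∑' n, y n ^ 2 :=
    ((hy.comp_injective hinj).sum_le_tsum F fun _ _ => sq_nonneg _).trans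
      (tsum_comp_le_tsum_of_inj hy (fun _ => sq_nonneg _) hinj)
  calc ∑ i ∈ F, w i * y (κ i - m)
      ≤ √(∑ i ∈ F, w i ^ 2) * √(∑ i ∈ F, y (κ i - m) ^ 2) :=
        Real.sum_mul_le_sqrt_mul_sqrt F _ _
    _ ≤ √(∑ i ∈ F, w i ^ 2) * √(∑' n, y n ^ 2) := by gcongr
    _ = _ := mul_comm _ _

/-- Young's inequality `ℓ¹ * ℓ² ⊆ ℓ²`, tested against finitely supported weights. -/
lemma sum_mul_conv_le (hx₀ : ∀ n, 0 ≤ x n) (hx : Summable x) (hy : Summable fun n => y n ^ 2)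
    {κ : ι → G} (hκ : Function.Injective κ) (F : Finset ι) (w : ι → ℝ) :
    ∑ i ∈ F, w i * ∑' m, x m * y (κ i - m) ≤
      (∑' n, x n) * (√(∑' n, y n ^ 2) * √(∑ i ∈ F, w i ^ 2)) := by
  have hsum (i : ι) : Summable fun m => w i * (x m * y (κ i - m)) :=
    (summable_mul_conv hx hy (κ i)).mul_left (w i)
  calc ∑ i ∈ F, w i * ∑' m, x m * y (κ i - m)
      = ∑' m, ∑ i ∈ F, w i * (x m * y (κ i - m)) := by
        simp only [← tsum_mul_left, Summable.tsum_finsetSum fun i _ => hsum i]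
    _ = ∑' m, x m * ∑ i ∈ F, w i * y (κ i - m) := by
        simp only [Finset.mul_sum, mul_left_comm]
    _ ≤ ∑' m, x m * (√(∑' n, y n ^ 2) * √(∑ i ∈ F, w i ^ 2)) := by
        refine Summable.tsum_le_tsum (fun m => ?_) ?_ (hx.mul_right _)
        · exact mul_le_mul_of_nonneg_left (sum_mul_comp_sub_le hy hκ F w m) (hx₀ m)
        · simpa only [Finset.mul_sum, mul_left_comm] using summable_sum fun i _ => hsum i
    _ = (∑' n, x n) * (√(∑' n, y n ^ 2) * √(∑ i ∈ F, w i ^ 2)) := tsum_mul_right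

lemma summable_prod_mul_conv (hx₀ : ∀ n, 0 ≤ x n) (hy₀ : ∀ n, 0 ≤ y n) (hz₀ : ∀ n, 0 ≤ z n)
    (hx : Summable x) (hy : Summable fun n => y n ^ 2) (hz : Summable fun n => z n ^ 2) :
    Summable fun p : G × G => z p.1 * (x p.2 * y (p.1 - p.2)) := by
  have hnonneg (p : G × G) : 0 ≤ z p.1 * (x p.2 * y (p.1 - p.2)) :=
    mul_nonneg (hz₀ _) (mul_nonneg (hx₀ _) (hy₀ _))
  refine (summable_prod_of_nonneg hnonneg).mpr
    ⟨fun k => (summable_mul_conv hx hy k).mul_left (z k),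
      summable_of_sum_le (c := (∑' n, x n) * (√(∑' n, y n ^ 2) * √(∑' n, z n ^ 2)))
        (fun k => tsum_nonneg fun m => hnonneg (k, m)) fun F => ?_⟩
  simp only [tsum_mul_left]
  refine (sum_mul_conv_le hx₀ hx hy Function.injective_id F z).trans ?_
  gcongr
  · exact tsum_nonneg hx₀
  · exact hz.sum_le_tsum F fun _ _ => sq_nonneg _

end Convolution

section Triads

variable {G : Type*} [AddCommGroup G]

/-- The cyclic rotation `(m, n, -(m + n)) ↦ (n, -(m + n), m)` of triads of frequencies with zero
sum, where a triad is recorded by its first two entries. -/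
def triadRotation (G : Type*) [AddCommGroup G] : G × G ≃ G × G where
  toFun p := (p.2, -(p.1 + p.2))
  invFun p := (-(p.1 + p.2), p.1)
  left_inv p := by simp
  right_inv p := by simp

lemma tsum_eq_zero_of_triad_sum_eq_zero {E : Type*} [AddCommGroup E] [TopologicalSpace E]
    [IsTopologicalAddGroup E] [T2Space E] [IsAddTorsionFree E] {H : G × G → E} (hH : Summable H)
    (hsum : ∀ p, H p + H p.swap + (H (triadRotation G p) + H (triadRotation G p).swap) +
      (H ((triadRotation G).symm p) + H ((triadRotation G).symm p).swap) = 0) :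
    ∑' p, H p = 0 := by
  have hperm (e : G × G ≃ G × G) : HasSum (fun p => H (e p)) (∑' p, H p) :=
    e.hasSum_iff.mpr hH.hasSum
  have htotal := (((hperm (.refl _)).add (hperm (.prodComm G G))).add
    ((hperm (triadRotation G)).add (hperm ((triadRotation G).trans (.prodComm G G))))).add
      ((hperm (triadRotation G).symm).add (hperm ((triadRotation G).symm.trans (.prodComm G G))))
  have hzero : HasSum (fun _ : G × G => (0 : E)) (6 • ∑' p, H p) := by
    convert htotal using 1
    · exact funext fun p => (hsum p).symm
    · abel
  exact (nsmul_eq_zero_iff_right (by norm_num)).mp (hzero.unique hasSum_zero)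

end Triads

instance : Countable Freq := inferInstanceAs (Countable {k : ℤ × ℤ // k ≠ 0})

lemma one_le_knormSq (k : Freq) : 1 ≤ knormSq k := by
  have hk : 0 < k.1.1 ^ 2 + k.1.2 ^ 2 := by
    have hne : ¬(k.1.1 = 0 ∧ k.1.2 = 0) := fun h => k.2 (Prod.ext h.1 h.2)
    by_contra! h
    exact hne ⟨by nlinarith, by nlinarith⟩
  rw [knormSq]
  exact_mod_cast hk

lemma knormSq_le_lam (k : Freq) : knormSq k ≤ lam k :=
  le_mul_of_one_le_left (zero_le_one.trans (one_le_knormSq k)) (by nlinarith [Real.pi_gt_three])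

lemma one_le_lam (k : Freq) : 1 ≤ lam k := (one_le_knormSq k).trans (knormSq_le_lam k)

lemma lam_pos (k : Freq) : 0 < lam k := one_pos.trans_le (one_le_lam k)

lemma norm_le_sqrt_lam (k : Freq) : ‖![k.1.1, k.1.2]‖ ≤ √(lam k) := by
  have hle {a : ℤ} (ha : (a : ℝ) ^ 2 ≤ knormSq k) : ‖a‖ ≤ √(lam k) := by
    rw [Int.norm_eq_abs]
    exact Real.abs_le_sqrt (ha.trans (knormSq_le_lam k))
  rw [pi_norm_le_iff_of_nonneg (Real.sqrt_nonneg _), Fin.forall_fin_two]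
  exact ⟨hle (le_add_of_nonneg_right (sq_nonneg _)), hle (le_add_of_nonneg_left (sq_nonneg _))⟩

lemma summable_lam_rpow_neg {α : ℝ} (hα : 1 < α) : Summable fun k => lam k ^ (-α) := by
  have hinj : Function.Injective fun k : Freq => ![k.1.1, k.1.2] := fun k l h =>
    Subtype.ext (Prod.ext (congrFun h 0) (congrFun h 1))
  have hlattice : Summable fun x : Fin 2 → ℤ => ‖x‖ ^ (-(2 * α)) :=
    EisensteinSeries.summable_one_div_norm_rpow (by linarith)
  refine (hlattice.comp_injective hinj).of_nonneg_of_le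
    (fun k => Real.rpow_nonneg (lam_pos k).le _) fun k => ?_
  have hne : ![k.1.1, k.1.2] ≠ 0 := fun h => k.2 (Prod.ext (congrFun h 0) (congrFun h 1))
  have hpow : lam k ^ (-α) = √(lam k) ^ (-(2 * α)) := by
    rw [Real.sqrt_eq_rpow, ← Real.rpow_mul (lam_pos k).le]
    ring_nf
  rw [hpow]
  exact Real.rpow_le_rpow_of_nonpos (norm_pos_iff.mpr hne) (norm_le_sqrt_lam k) (by linarith)

/-- The constant `∑ₖ λₖ^(-α)` of the embedding of `Ḣ^α`, `α > 1`, into the fields with absolutely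
convergent Fourier series. -/
def wienerConst (α : ℝ) : ℝ := ∑' k, lam k ^ (-α)

lemma wienerConst_nonneg (α : ℝ) : 0 ≤ wienerConst α :=
  tsum_nonneg fun k => Real.rpow_nonneg (lam_pos k).le _

section Sobolev

variable {α β : ℝ} {c d : Coef} {F : Finset Freq}

lemma lam_rpow_mul_norm_sq_nonneg (α : ℝ) (c : Coef) (k : Freq) : 0 ≤ lam k ^ α * ‖c k‖ ^ 2 :=
  mul_nonneg (Real.rpow_nonneg (lam_pos k).le _) (sq_nonneg _)

lemma hSq_nonneg (α : ℝ) (c : Coef) : 0 ≤ hSq α c := tsum_nonneg (lam_rpow_mul_norm_sq_nonneg α c)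

lemma hN_sq (α : ℝ) (c : Coef) : hN α c ^ 2 = hSq α c := Real.sq_sqrt (hSq_nonneg α c)

lemma hN_nonneg (α : ℝ) (c : Coef) : 0 ≤ hN α c := Real.sqrt_nonneg _

lemma lam_rpow_mul_norm_sq_mono (h : α ≤ β) (c : Coef) (k : Freq) :
    lam k ^ α * ‖c k‖ ^ 2 ≤ lam k ^ β * ‖c k‖ ^ 2 := by
  gcongr
  exact one_le_lam k

lemma FinH.mono (hc : FinH β c) (h : α ≤ β) : FinH α c :=
  Summable.of_nonneg_of_le (lam_rpow_mul_norm_sq_nonneg α c) (lam_rpow_mul_norm_sq_mono h c) hc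

lemma hSq_mono (hc : FinH β c) (h : α ≤ β) : hSq α c ≤ hSq β c :=
  Summable.tsum_le_tsum (lam_rpow_mul_norm_sq_mono h c) (hc.mono h) hc

lemma hN_mono (hc : FinH β c) (h : α ≤ β) : hN α c ≤ hN β c := Real.sqrt_le_sqrt (hSq_mono hc h)

lemma lam_rpow_mul_norm_sq_add_le (α : ℝ) (c d : Coef) (k : Freq) :
    lam k ^ α * ‖(c + d) k‖ ^ 2 ≤ 2 * (lam k ^ α * ‖c k‖ ^ 2 + lam k ^ α * ‖d k‖ ^ 2) := by
  have hsq : ‖(c + d) k‖ ^ 2 ≤ 2 * (‖c k‖ ^ 2 + ‖d k‖ ^ 2) :=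
    (pow_le_pow_left₀ (norm_nonneg _) (norm_add_le _ _) 2).trans add_sq_le
  rw [← mul_add, mul_left_comm]
  exact mul_le_mul_of_nonneg_left hsq (Real.rpow_nonneg (lam_pos k).le α)

lemma FinH.add (hc : FinH α c) (hd : FinH α d) : FinH α (c + d) :=
  Summable.of_nonneg_of_le (lam_rpow_mul_norm_sq_nonneg α _) (lam_rpow_mul_norm_sq_add_le α c d)
    ((Summable.add hc hd).mul_left 2)

lemma FinH.neg (hc : FinH α c) : FinH α (-c) := by
  simpa only [FinH, Pi.neg_apply, norm_neg] using hc

lemma FinH.sub (hc : FinH α c) (hd : FinH α d) : FinH α (c - d) :=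
  sub_eq_add_neg c d ▸ hc.add hd.neg

lemma hSq_neg (α : ℝ) (c : Coef) : hSq α (-c) = hSq α c := by
  simp only [hSq, Pi.neg_apply, norm_neg]

lemma hSq_add_le (hc : FinH α c) (hd : FinH α d) :
    hSq α (c + d) ≤ 2 * (hSq α c + hSq α d) := by
  rw [hSq, hSq, hSq, ← Summable.tsum_add hc hd, ← tsum_mul_left]
  exact Summable.tsum_le_tsum (lam_rpow_mul_norm_sq_add_le α c d) (hc.add hd)
    ((Summable.add hc hd).mul_left 2)

lemma hSq_sub_le (hc : FinH α c) (hd : FinH α d) :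
    hSq α (c - d) ≤ 2 * (hSq α c + hSq α d) := by
  simpa only [← sub_eq_add_neg, hSq_neg] using hSq_add_le hc hd.neg

/-- The amplitudes `λₖ^(α/2) ‖cₖ‖`, whose squares sum up to `‖c‖²_{Ḣ^α}`. -/
def absCoef (α : ℝ) (c : Coef) (k : Freq) : ℝ := lam k ^ (α / 2) * ‖c k‖

lemma absCoef_nonneg (α : ℝ) (c : Coef) (k : Freq) : 0 ≤ absCoef α c k :=
  mul_nonneg (Real.rpow_nonneg (lam_pos k).le _) (norm_nonneg _)

lemma absCoef_sq (α : ℝ) (c : Coef) (k : Freq) :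
    absCoef α c k ^ 2 = lam k ^ α * ‖c k‖ ^ 2 := by
  rw [absCoef, mul_pow, ← Real.rpow_natCast, ← Real.rpow_mul (lam_pos k).le]
  norm_num

lemma absCoef_zero (c : Coef) (k : Freq) : absCoef 0 c k = ‖c k‖ := by simp [absCoef]

lemma absCoef_add (α β : ℝ) (c : Coef) (k : Freq) :
    absCoef (α + β) c k = lam k ^ (α / 2) * absCoef β c k := by
  rw [absCoef, absCoef, add_div, Real.rpow_add (lam_pos k), mul_assoc]

/-- The truncation of `‖c‖²_{Ḣ^α}` to a finite set of frequencies. -/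
def hSqOn (F : Finset Freq) (α : ℝ) (c : Coef) : ℝ := ∑ k ∈ F, lam k ^ α * ‖c k‖ ^ 2

/-- The truncation of the real `Ḣ^α` inner product to a finite set of frequencies. -/
def hInnerOn (F : Finset Freq) (α : ℝ) (c d : Coef) : ℝ :=
  ∑ k ∈ F, lam k ^ α * inner ℝ (c k) (d k)

lemma hSqOn_nonneg (F : Finset Freq) (α : ℝ) (c : Coef) : 0 ≤ hSqOn F α c :=
  Finset.sum_nonneg fun k _ => lam_rpow_mul_norm_sq_nonneg α c k

lemma hSqOn_le_hSq (F : Finset Freq) (hc : FinH α c) : hSqOn F α c ≤ hSq α c :=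
  Summable.sum_le_tsum F (fun k _ => lam_rpow_mul_norm_sq_nonneg α c k) hc

lemma sum_absCoef_sq (F : Finset Freq) (α : ℝ) (c : Coef) :
    ∑ k ∈ F, absCoef α c k ^ 2 = hSqOn F α c :=
  Finset.sum_congr rfl fun k _ => absCoef_sq α c k

lemma hSq_le_of_hSqOn_le {b : ℝ} (h : ∀ F, hSqOn F α c ≤ b) : hSq α c ≤ b :=
  Real.tsum_le_of_sum_le (lam_rpow_mul_norm_sq_nonneg α c) h

lemma hasDerivAt_hSqOn {v : ℝ → Coef} {v' : Coef} {t : ℝ}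
    (hv : ∀ k ∈ F, HasDerivAt (fun s => v s k) (v' k) t) (α : ℝ) :
    HasDerivAt (fun s => hSqOn F α (v s)) (2 * hInnerOn F α (v t) v') t := by
  simp only [hSqOn, hInnerOn, Finset.mul_sum, mul_left_comm (2 : ℝ)]
  exact .fun_sum fun k hk => (hv k hk).norm_sq.const_mul _

lemma two_mul_hInnerOn_le (F : Finset Freq) (α : ℝ) (c d : Coef) {ε : ℝ} (hε : 0 < ε) :
    2 * hInnerOn F α c d ≤ ε * hSqOn F (α + 1) c + ε⁻¹ * hSqOn F (α - 1) d := by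
  simp only [hInnerOn, hSqOn, Finset.mul_sum, ← Finset.sum_add_distrib]
  refine Finset.sum_le_sum fun k _ => ?_
  have hlam := lam_pos k
  have hyoung : 2 * inner ℝ (c k) (d k) ≤
      ε * lam k * ‖c k‖ ^ 2 + (ε * lam k)⁻¹ * ‖d k‖ ^ 2 := by
    have hsq : 0 ≤ (ε * lam k)⁻¹ * (ε * lam k * ‖c k‖ - ‖d k‖) ^ 2 := by positivity
    have hexpand : (ε * lam k)⁻¹ * (ε * lam k * ‖c k‖ - ‖d k‖) ^ 2 =
        ε * lam k * ‖c k‖ ^ 2 + (ε * lam k)⁻¹ * ‖d k‖ ^ 2 - 2 * (‖c k‖ * ‖d k‖) := by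
      field_simp
      ring
    linarith [real_inner_le_norm (c k) (d k)]
  calc 2 * (lam k ^ α * inner ℝ (c k) (d k))
      = lam k ^ α * (2 * inner ℝ (c k) (d k)) := by ring
    _ ≤ lam k ^ α * (ε * lam k * ‖c k‖ ^ 2 + (ε * lam k)⁻¹ * ‖d k‖ ^ 2) := by gcongr
    _ = ε * (lam k ^ (α + 1) * ‖c k‖ ^ 2) + ε⁻¹ * (lam k ^ (α - 1) * ‖d k‖ ^ 2) := by
      rw [Real.rpow_add_one hlam.ne', Real.rpow_sub_one hlam.ne', mul_inv]
      ring

lemma hInnerOn_add_right (F : Finset Freq) (α : ℝ) (c d e : Coef) :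
    hInnerOn F α c (d + e) = hInnerOn F α c d + hInnerOn F α c e := by
  simp only [hInnerOn, Pi.add_apply, inner_add_right, mul_add, Finset.sum_add_distrib]

lemma abs_hInnerOn_le (F : Finset Freq) (α : ℝ) (c d : Coef) :
    |hInnerOn F α c d| ≤ ∑ k ∈ F, absCoef (2 * α) c k * ‖d k‖ := by
  refine (Finset.abs_sum_le_sum_abs _ _).trans (Finset.sum_le_sum fun k _ => ?_)
  have hlam := Real.rpow_nonneg (lam_pos k).le α
  rw [abs_mul, abs_of_nonneg hlam, absCoef, mul_div_cancel_left₀ α two_ne_zero, mul_assoc]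
  gcongr
  exact abs_real_inner_le_norm _ _

/-- The Wiener norm `∑ₖ ‖cₖ‖`. -/
def wienerNorm (c : Coef) : ℝ := ∑' k, ‖c k‖

lemma wienerNorm_nonneg (c : Coef) : 0 ≤ wienerNorm c := tsum_nonneg fun _ => norm_nonneg _

lemma finH_zero_of_summable_norm (hc : Summable fun k => ‖c k‖) : FinH 0 c := by
  refine (hc.mul_left (wienerNorm c)).of_nonneg_of_le (lam_rpow_mul_norm_sq_nonneg 0 c) fun k => ?_
  rw [Real.rpow_zero, one_mul, sq]
  gcongr
  exact hc.le_tsum k fun _ _ => norm_nonneg _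

lemma FinH.sum_norm_le (hα : 1 < α) (hc : FinH α c) (F : Finset Freq) :
    ∑ k ∈ F, ‖c k‖ ≤ √(wienerConst α * hSq α c) := by
  have hsplit (k : Freq) : ‖c k‖ = √(lam k ^ (-α)) * absCoef α c k := by
    have hlam := lam_pos k
    rw [absCoef, Real.sqrt_eq_rpow, ← Real.rpow_mul hlam.le, ← mul_assoc, ← Real.rpow_add hlam]
    ring_nf
    simp
  calc ∑ k ∈ F, ‖c k‖ = ∑ k ∈ F, √(lam k ^ (-α)) * absCoef α c k :=
        Finset.sum_congr rfl fun k _ => hsplit k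
    _ ≤ √(∑ k ∈ F, √(lam k ^ (-α)) ^ 2) * √(∑ k ∈ F, absCoef α c k ^ 2) :=
        Real.sum_mul_le_sqrt_mul_sqrt F _ _
    _ ≤ √(wienerConst α) * √(hSq α c) := by
        have hnonneg (k : Freq) : 0 ≤ lam k ^ (-α) := Real.rpow_nonneg (lam_pos k).le _
        simp only [Real.sq_sqrt (hnonneg _), sum_absCoef_sq]
        gcongr
        · exact (summable_lam_rpow_neg hα).sum_le_tsum F fun k _ => hnonneg k
        · exact hSqOn_le_hSq F hc
    _ = √(wienerConst α * hSq α c) := (Real.sqrt_mul (wienerConst_nonneg α) _).symm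

lemma FinH.summable_norm (hα : 1 < α) (hc : FinH α c) : Summable fun k => ‖c k‖ :=
  summable_of_sum_le (fun _ => norm_nonneg _) (hc.sum_norm_le hα)

lemma FinH.wienerNorm_sq_le (hα : 1 < α) (hc : FinH α c) :
    wienerNorm c ^ 2 ≤ wienerConst α * hSq α c :=
  (Real.le_sqrt (wienerNorm_nonneg c) (mul_nonneg (wienerConst_nonneg α) (hSq_nonneg α c))).mp <|
    Real.tsum_le_of_sum_le (fun _ => norm_nonneg _) (hc.sum_norm_le hα)

end Sobolev

section ZeroExtension

variable {M N : Type*} [Zero M] [Zero N]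

/-- The extension by zero of a family indexed by the nonzero frequencies to the whole lattice `ℤ²`,
where frequencies can be added. -/
def zeroExt (φ : Freq → M) : ℤ × ℤ → M := Function.extend Subtype.val φ 0

@[simp]
lemma zeroExt_coe (φ : Freq → M) (k : Freq) : zeroExt φ k.1 = φ k :=
  Subtype.val_injective.extend_apply φ 0 k

@[simp]
lemma zeroExt_zero (φ : Freq → M) : zeroExt φ 0 = 0 :=
  Function.extend_apply' _ _ _ fun ⟨k, hk⟩ => k.2 hk

@[elab_as_elim]
lemma zero_or_freq_induction {P : ℤ × ℤ → Prop} (zero : P 0) (coe : ∀ k : Freq, P k.1)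
    (k : ℤ × ℤ) : P k := by
  by_cases hk : k = 0
  · exact hk ▸ zero
  · exact coe ⟨k, hk⟩

lemma map_zeroExt {g : M → N} (hg : g 0 = 0) (φ : Freq → M) (k : ℤ × ℤ) :
    g (zeroExt φ k) = zeroExt (fun l => g (φ l)) k := by
  induction k using zero_or_freq_induction with
  | zero => simp [hg]
  | coe k => simp

lemma zeroExt_nonneg {φ : Freq → ℝ} (hφ : ∀ k, 0 ≤ φ k) (k : ℤ × ℤ) : 0 ≤ zeroExt φ k := by
  induction k using zero_or_freq_induction with
  | zero => simp
  | coe k => simpa using hφ k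

lemma zeroExt_sub (c d : Coef) (k : ℤ × ℤ) : zeroExt (c - d) k = zeroExt c k - zeroExt d k := by
  induction k using zero_or_freq_induction with
  | zero => simp
  | coe k => simp

lemma zeroExt_neg_of_isReal {c : Coef} (hc : IsReal c) (k : ℤ × ℤ) :
    zeroExt c (-k) = -(starRingEnd ℂ) (zeroExt c k) := by
  induction k using zero_or_freq_induction with
  | zero => simp
  | coe k => rw [zeroExt_coe, ← hc k]; exact zeroExt_coe c (fneg k)

lemma tsum_zeroExt (φ : Freq → ℝ) : ∑' k, zeroExt φ k = ∑' k, φ k :=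
  tsum_extend_zero Subtype.val_injective φ

lemma summable_zeroExt {φ : Freq → ℝ} : Summable (zeroExt φ) ↔ Summable φ :=
  summable_extend_zero Subtype.val_injective

lemma zeroExt_absCoef_nonneg (α : ℝ) (c : Coef) (k : ℤ × ℤ) : 0 ≤ zeroExt (absCoef α c) k :=
  zeroExt_nonneg (absCoef_nonneg α c) k

lemma zeroExt_absCoef_sq (α : ℝ) (c : Coef) (k : ℤ × ℤ) :
    zeroExt (absCoef α c) k ^ 2 = zeroExt (fun l => lam l ^ α * ‖c l‖ ^ 2) k := by
  simp only [← absCoef_sq]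
  exact map_zeroExt (g := (· ^ 2)) (by simp) _ k

lemma FinH.summable_zeroExt_absCoef_sq {α : ℝ} {c : Coef} (hc : FinH α c) :
    Summable fun k => zeroExt (absCoef α c) k ^ 2 := by
  simpa only [zeroExt_absCoef_sq] using summable_zeroExt.mpr hc

lemma tsum_zeroExt_absCoef_sq (α : ℝ) (c : Coef) :
    ∑' k, zeroExt (absCoef α c) k ^ 2 = hSq α c := by
  simp only [zeroExt_absCoef_sq]
  exact tsum_zeroExt _

lemma summable_zeroExt_absCoef_zero {c : Coef} (hc : Summable fun k => ‖c k‖) :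
    Summable (zeroExt (absCoef 0 c)) :=
  summable_zeroExt.mpr (hc.congr fun k => (absCoef_zero c k).symm)

lemma tsum_zeroExt_absCoef_zero (c : Coef) : ∑' k, zeroExt (absCoef 0 c) k = wienerNorm c := by
  simp only [tsum_zeroExt, absCoef_zero, wienerNorm]

end ZeroExtension

/-- The Euclidean modulus of a lattice point. -/
def freqNorm (k : ℤ × ℤ) : ℝ := √((k.1 : ℝ) ^ 2 + (k.2 : ℝ) ^ 2)

lemma freqNorm_nonneg (k : ℤ × ℤ) : 0 ≤ freqNorm k := Real.sqrt_nonneg _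

lemma freqNorm_sq (k : ℤ × ℤ) : freqNorm k ^ 2 = (k.1 : ℝ) ^ 2 + (k.2 : ℝ) ^ 2 :=
  Real.sq_sqrt (by positivity)

lemma freqNorm_neg (k : ℤ × ℤ) : freqNorm (-k) = freqNorm k := by simp [freqNorm]

lemma lam_eq_sq (k : Freq) : lam k = (2 * Real.pi * freqNorm k.1) ^ 2 := by
  rw [mul_pow, freqNorm_sq, lam, knormSq]
  ring

lemma sqrt_lam (k : Freq) : √(lam k) = 2 * Real.pi * freqNorm k.1 := by
  rw [lam_eq_sq, Real.sqrt_sq (mul_nonneg Real.two_pi_pos.le (freqNorm_nonneg _))]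

lemma zeroExt_absCoef (j : ℕ) (c : Coef) (k : ℤ × ℤ) :
    zeroExt (absCoef j c) k = (2 * Real.pi * freqNorm k) ^ j * ‖zeroExt c k‖ := by
  induction k using zero_or_freq_induction with
  | zero => simp
  | coe k =>
    rw [zeroExt_coe, zeroExt_coe, absCoef, Real.rpow_div_two_eq_sqrt _ (lam_pos k).le, sqrt_lam,
      Real.rpow_natCast]

lemma abs_cross_le (m n : ℤ × ℤ) :
    |(m.2 : ℝ) * n.1 - m.1 * n.2| ≤ freqNorm m * freqNorm n := by
  rw [freqNorm, freqNorm, ← Real.sqrt_mul (by positivity)]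
  exact Real.abs_le_sqrt (by linarith [sq_nonneg ((m.1 : ℝ) * n.1 + m.2 * n.2)])

lemma abs_dot_le (m n : ℤ × ℤ) :
    |(m.1 : ℝ) * n.1 + m.2 * n.2| ≤ freqNorm m * freqNorm n := by
  rw [freqNorm, freqNorm, ← Real.sqrt_mul (by positivity)]
  exact Real.abs_le_sqrt (by linarith [sq_nonneg ((m.2 : ℝ) * n.1 - m.1 * n.2)])

/-- The symbol `(e_m · n) (e_n · e_k)` of the transport nonlinearity. Division by zero makes it
vanish as soon as one of the three frequencies is zero. -/
def transportSymbol (m n k : ℤ × ℤ) : ℝ :=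
  ((m.2 : ℝ) * n.1 - m.1 * n.2) / freqNorm m *
    (((n.1 : ℝ) * k.1 + n.2 * k.2) / (freqNorm n * freqNorm k))

lemma abs_transportSymbol_le (m n k : ℤ × ℤ) : |transportSymbol m n k| ≤ freqNorm n := by
  have hcross : |((m.2 : ℝ) * n.1 - m.1 * n.2) / freqNorm m| ≤ freqNorm n := by
    rw [abs_div, abs_of_nonneg (freqNorm_nonneg m)]
    exact div_le_of_le_mul₀ (freqNorm_nonneg m) (freqNorm_nonneg n)
      ((abs_cross_le m n).trans_eq (mul_comm _ _))
  have hdot : |((n.1 : ℝ) * k.1 + n.2 * k.2) / (freqNorm n * freqNorm k)| ≤ 1 := by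
    have hnonneg := mul_nonneg (freqNorm_nonneg n) (freqNorm_nonneg k)
    rw [abs_div, abs_of_nonneg hnonneg]
    exact div_le_one_of_le₀ (abs_dot_le n k) hnonneg
  rw [transportSymbol, abs_mul]
  exact (mul_le_mul hcross hdot (abs_nonneg _) (freqNorm_nonneg n)).trans_eq (mul_one _)

/-- Since `e_m ⊥ m`, the derivative may be moved from the frequency `k - m` to the output `k`. -/
lemma abs_transportSymbol_sub_le (m k : ℤ × ℤ) :
    |transportSymbol m (k - m) k| ≤ freqNorm k := by
  have hswap : |transportSymbol m (k - m) k| = |transportSymbol m k (k - m)| := by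
    simp only [transportSymbol, Prod.fst_sub, Prod.snd_sub, Int.cast_sub]
    ring_nf
  exact hswap.trans_le (abs_transportSymbol_le m k (k - m))

section Transport

variable {c d u v : Coef}

/-- The contribution of the modes `m` and `k - m` to the frequency `k` of `B[c, d]`, where the
coefficients are extended by zero. -/
def transportTerm (c d : Coef) (k m : ℤ × ℤ) : ℂ :=
  (2 * Real.pi : ℝ) * Complex.I *
    (zeroExt c m * zeroExt d (k - m) * (transportSymbol m (k - m) k : ℂ))

lemma Bc_eq_tsum_transportTerm (c d : Coef) (k : Freq) :
    Bc c d k = ∑' m, transportTerm c d k.1 m := by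
  have hsupp : Function.support (fun m : ℤ × ℤ =>
      zeroExt c m * zeroExt d (k.1 - m) * (transportSymbol m (k.1 - m) k.1 : ℂ)) ⊆
        Set.range (Subtype.val : Freq → ℤ × ℤ) := fun m hm =>
    ⟨⟨m, fun hm₀ => hm (by simp [hm₀])⟩, rfl⟩
  simp only [transportTerm]
  rw [Bc, tsum_mul_left, ← Subtype.val_injective.tsum_eq hsupp]
  congr 1
  refine tsum_congr fun m => ?_
  split_ifs with h
  · have hsymbol : dotR (evec m) (fvec ⟨k.1 - m.1, h⟩) * dotR (evec ⟨k.1 - m.1, h⟩) (evec k) =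
        transportSymbol m.1 (k.1 - m.1) k.1 := by
      simp only [dotR, evec, fvec, transportSymbol, freqNorm, knormSq]
      ring
    have hd : zeroExt d (k.1 - m.1) = d ⟨k.1 - m.1, h⟩ := zeroExt_coe d ⟨k.1 - m.1, h⟩
    rw [hsymbol, zeroExt_coe, hd]
  · rw [not_not.mp h, zeroExt_zero, mul_zero, zero_mul]

lemma norm_transportTerm (c d : Coef) (k m : ℤ × ℤ) :
    ‖transportTerm c d k m‖ =
      2 * Real.pi * |transportSymbol m (k - m) k| * (‖zeroExt c m‖ * ‖zeroExt d (k - m)‖) := by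
  rw [transportTerm, norm_mul, norm_mul, norm_mul, norm_mul, Complex.norm_I, Complex.norm_real,
    Complex.norm_real, Real.norm_of_nonneg Real.two_pi_pos.le, Real.norm_eq_abs]
  ring

lemma zeroExt_absCoef_zero (c : Coef) (k : ℤ × ℤ) : zeroExt (absCoef 0 c) k = ‖zeroExt c k‖ := by
  simpa using zeroExt_absCoef 0 c k

lemma zeroExt_absCoef_one (c : Coef) (k : ℤ × ℤ) :
    zeroExt (absCoef 1 c) k = 2 * Real.pi * freqNorm k * ‖zeroExt c k‖ := by
  simpa using zeroExt_absCoef 1 c k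

lemma norm_transportTerm_le (c d : Coef) (k m : ℤ × ℤ) :
    ‖transportTerm c d k m‖ ≤ zeroExt (absCoef 0 c) m * zeroExt (absCoef 1 d) (k - m) := by
  rw [norm_transportTerm, zeroExt_absCoef_zero, zeroExt_absCoef_one]
  calc 2 * Real.pi * |transportSymbol m (k - m) k| * (‖zeroExt c m‖ * ‖zeroExt d (k - m)‖)
      ≤ 2 * Real.pi * freqNorm (k - m) * (‖zeroExt c m‖ * ‖zeroExt d (k - m)‖) := by
        gcongr
        exact abs_transportSymbol_le m (k - m) k
    _ = _ := by ring

lemma norm_transportTerm_coe_le (c d : Coef) (k : Freq) (m : ℤ × ℤ) :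
    ‖transportTerm c d k.1 m‖ ≤
      √(lam k) * (zeroExt (absCoef 0 c) m * zeroExt (absCoef 0 d) (k.1 - m)) := by
  rw [norm_transportTerm, zeroExt_absCoef_zero, zeroExt_absCoef_zero, sqrt_lam]
  gcongr
  exact abs_transportSymbol_sub_le m k.1

lemma summable_zeroExt_absCoef_mul_sub (hc : Summable fun k => ‖c k‖) {α : ℝ} (hd : FinH α d)
    (k : ℤ × ℤ) : Summable fun m => zeroExt (absCoef 0 c) m * zeroExt (absCoef α d) (k - m) :=
  summable_mul_conv (summable_zeroExt_absCoef_zero hc) hd.summable_zeroExt_absCoef_sq k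

lemma summable_transportTerm (hc : Summable fun k => ‖c k‖) (hd : FinH 0 d) (k : Freq) :
    Summable (transportTerm c d k.1) :=
  .of_norm_bounded ((summable_zeroExt_absCoef_mul_sub hc hd k.1).mul_left _)
    (norm_transportTerm_coe_le c d k)

lemma Bc_self_sub_Bc_self (hu : Summable fun k => ‖u k‖) (hv : Summable fun k => ‖v k‖) :
    Bc u u - Bc v v = Bc u (u - v) + Bc (u - v) v := by
  have hu₂ := finH_zero_of_summable_norm hu
  have hv₂ := finH_zero_of_summable_norm hv
  have hw : Summable fun k => ‖(u - v) k‖ :=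
    (hu.add hv).of_nonneg_of_le (fun _ => norm_nonneg _) fun _ => norm_sub_le _ _
  funext k
  simp only [Pi.sub_apply, Pi.add_apply, Bc_eq_tsum_transportTerm]
  rw [← (summable_transportTerm hu hu₂ k).tsum_sub (summable_transportTerm hv hv₂ k),
    ← (summable_transportTerm hu (hu₂.sub hv₂) k).tsum_add (summable_transportTerm hw hv₂ k)]
  refine tsum_congr fun m => ?_
  simp only [transportTerm, zeroExt_sub]
  ring

/-- The convolution of two families of amplitudes. -/
def freqConv (x y : Freq → ℝ) (k : Freq) : ℝ := ∑' m, zeroExt x m * zeroExt y (k.1 - m)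

lemma freqConv_comm (x y : Freq → ℝ) : freqConv x y = freqConv y x :=
  funext fun k => tsum_mul_sub_comm k.1

lemma sum_absCoef_mul_freqConv_le (hc : Summable fun k => ‖c k‖) {α : ℝ} (hd : FinH α d)
    (F : Finset Freq) (β : ℝ) (w : Coef) :
    ∑ k ∈ F, absCoef β w k * freqConv (absCoef 0 c) (absCoef α d) k ≤
      wienerNorm c * (√(hSq α d) * √(hSqOn F β w)) := by
  have h := sum_mul_conv_le (zeroExt_absCoef_nonneg 0 c) (summable_zeroExt_absCoef_zero hc)
    hd.summable_zeroExt_absCoef_sq (κ := fun k : Freq => k.1) Subtype.val_injective F (absCoef β w)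
  rwa [tsum_zeroExt_absCoef_zero, tsum_zeroExt_absCoef_sq, sum_absCoef_sq] at h

lemma norm_Bc_le (hc : Summable fun k => ‖c k‖) (hd : FinH 1 d) (k : Freq) :
    ‖Bc c d k‖ ≤ freqConv (absCoef 0 c) (absCoef 1 d) k := by
  rw [Bc_eq_tsum_transportTerm]
  exact tsum_of_norm_bounded (summable_zeroExt_absCoef_mul_sub hc hd k.1).hasSum
    (norm_transportTerm_le c d k.1)

lemma norm_Bc_le_sqrt_lam_mul {k : Freq} (h : Summable fun m =>
    zeroExt (absCoef 0 c) m * zeroExt (absCoef 0 d) (k.1 - m)) :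
    ‖Bc c d k‖ ≤ √(lam k) * freqConv (absCoef 0 c) (absCoef 0 d) k := by
  rw [Bc_eq_tsum_transportTerm]
  exact tsum_of_norm_bounded (h.hasSum.mul_left _) (norm_transportTerm_coe_le c d k)

lemma abs_hInnerOn_Bc_le (hc : Summable fun k => ‖c k‖) (hd : FinH 1 d) (F : Finset Freq)
    (α : ℝ) (w : Coef) :
    |hInnerOn F α w (Bc c d)| ≤ wienerNorm c * (√(hSq 1 d) * √(hSqOn F (2 * α) w)) := by
  refine (abs_hInnerOn_le F α w _).trans
    (le_trans (Finset.sum_le_sum fun k _ => ?_) (sum_absCoef_mul_freqConv_le hc hd F (2 * α) w))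
  exact mul_le_mul_of_nonneg_left (norm_Bc_le hc hd k) (absCoef_nonneg _ w k)

lemma abs_hInnerOn_Bc_le_sum (F : Finset Freq) (α : ℝ) (w : Coef)
    (h : ∀ k : Freq, Summable fun m =>
      zeroExt (absCoef 0 c) m * zeroExt (absCoef 0 d) (k.1 - m)) :
    |hInnerOn F α w (Bc c d)| ≤
      ∑ k ∈ F, absCoef (1 + 2 * α) w k * freqConv (absCoef 0 c) (absCoef 0 d) k := by
  refine (abs_hInnerOn_le F α w _).trans (Finset.sum_le_sum fun k _ => ?_)
  rw [absCoef_add, ← Real.sqrt_eq_rpow, mul_comm √(lam k), mul_assoc]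
  exact mul_le_mul_of_nonneg_left (norm_Bc_le_sqrt_lam_mul (h k)) (absCoef_nonneg _ w k)

lemma abs_hInnerOn_Bc_le_left (hc : Summable fun k => ‖c k‖) (hd : FinH 0 d) (F : Finset Freq)
    (α : ℝ) (w : Coef) :
    |hInnerOn F α w (Bc c d)| ≤
      wienerNorm c * (√(hSq 0 d) * √(hSqOn F (1 + 2 * α) w)) :=
  (abs_hInnerOn_Bc_le_sum F α w fun k => summable_zeroExt_absCoef_mul_sub hc hd k.1).trans
    (sum_absCoef_mul_freqConv_le hc hd F _ w)

lemma abs_hInnerOn_Bc_le_right (hc : FinH 0 c) (hd : Summable fun k => ‖d k‖) (F : Finset Freq)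
    (α : ℝ) (w : Coef) :
    |hInnerOn F α w (Bc c d)| ≤
      wienerNorm d * (√(hSq 0 c) * √(hSqOn F (1 + 2 * α) w)) := by
  refine (abs_hInnerOn_Bc_le_sum F α w fun k =>
    (summable_mul_sub_comm k.1).mpr (summable_zeroExt_absCoef_mul_sub hd hc k.1)).trans ?_
  rw [freqConv_comm]
  exact sum_absCoef_mul_freqConv_le hd hc F _ w

lemma abs_hInnerOn_neg_one_Bc_self_sub_le (hu : Summable fun k => ‖u k‖)
    (hv : Summable fun k => ‖v k‖) (F : Finset Freq) :
    |hInnerOn F (-1) (u - v) (Bc u u - Bc v v)| ≤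
      (wienerNorm u + wienerNorm v) * (√(hSq 0 (u - v)) * √(hSqOn F (-1) (u - v))) := by
  have hw := (finH_zero_of_summable_norm hu).sub (finH_zero_of_summable_norm hv)
  have hleft := abs_hInnerOn_Bc_le_left hu hw F (-1) (u - v)
  have hright := abs_hInnerOn_Bc_le_right hw hv F (-1) (u - v)
  rw [show (1 : ℝ) + 2 * -1 = -1 by norm_num] at hleft hright
  rw [Bc_self_sub_Bc_self hu hv, hInnerOn_add_right, add_mul]
  exact (abs_add_le _ _).trans (add_le_add hleft hright)

end Transport

section Enstrophy

variable {u : Coef}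

/-- The contribution of the modes `m` and `k - m` to `λ_k û(k)̄ B[u, u]^(k)`, at the pair
`(k, m)`. -/
def enstrophyTerm (u : Coef) (p : (ℤ × ℤ) × (ℤ × ℤ)) : ℂ :=
  ((2 * Real.pi * freqNorm p.1) ^ 2 : ℝ) * (starRingEnd ℂ) (zeroExt u p.1) *
    transportTerm u u p.1 p.2

lemma summable_enstrophyTerm (hu : FinH 2 u) : Summable (enstrophyTerm u) := by
  have hu₁ := hu.mono one_le_two
  have hprod := summable_prod_mul_conv (zeroExt_absCoef_nonneg 0 u) (zeroExt_absCoef_nonneg 1 u)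
    (zeroExt_absCoef_nonneg 2 u) (summable_zeroExt_absCoef_zero (hu.summable_norm one_lt_two))
    hu₁.summable_zeroExt_absCoef_sq hu.summable_zeroExt_absCoef_sq
  refine .of_norm_bounded hprod fun p => ?_
  have hweight : zeroExt (absCoef 2 u) p.1 =
      ‖((2 * Real.pi * freqNorm p.1) ^ 2 : ℝ) * (starRingEnd ℂ) (zeroExt u p.1)‖ := by
    rw [norm_mul, RCLike.norm_conj, Complex.norm_real, Real.norm_of_nonneg (sq_nonneg _)]
    exact_mod_cast zeroExt_absCoef 2 u p.1
  rw [enstrophyTerm, norm_mul, hweight]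
  gcongr
  exact norm_transportTerm_le u u p.1 p.2

/-- The weight of the triad `(m, n, -(m + n))` in the production of enstrophy. -/
def triadWeight (m n : ℤ × ℤ) : ℝ :=
  (((m + n).1 : ℝ) ^ 2 + ((m + n).2 : ℝ) ^ 2) * ((m.2 : ℝ) * n.1 - m.1 * n.2) *
    ((n.1 : ℝ) * (m + n).1 + n.2 * (m + n).2)

lemma triadWeight_sum_eq_zero (m n : ℤ × ℤ) :
    triadWeight m n + triadWeight n m +
      (triadWeight n (-(m + n)) + triadWeight (-(m + n)) n) +
        (triadWeight (-(m + n)) m + triadWeight m (-(m + n))) = 0 := by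
  simp only [triadWeight, Prod.fst_add, Prod.snd_add, Prod.fst_neg, Prod.snd_neg, Int.cast_add,
    Int.cast_neg]
  ring

lemma enstrophyTerm_add_eq (hu : IsReal u) (m n : ℤ × ℤ) :
    enstrophyTerm u (m + n, m) = -(2 * Real.pi) ^ 3 * Complex.I * (triadWeight m n *
      ((zeroExt u m / freqNorm m) * (zeroExt u n / freqNorm n) *
        (zeroExt u (-(m + n)) / freqNorm (-(m + n))))) := by
  rw [enstrophyTerm, transportTerm, add_sub_cancel_left, zeroExt_neg_of_isReal hu, freqNorm_neg,
    mul_pow, freqNorm_sq, transportSymbol, triadWeight]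
  push_cast
  ring

lemma tsum_enstrophyTerm (hu : FinH 2 u) (hreal : IsReal u) : ∑' p, enstrophyTerm u p = 0 := by
  let e : (ℤ × ℤ) × (ℤ × ℤ) ≃ (ℤ × ℤ) × (ℤ × ℤ) :=
    (Equiv.prodShear (.refl _) Equiv.addLeft).trans (.prodComm _ _)
  rw [← e.tsum_eq]
  refine tsum_eq_zero_of_triad_sum_eq_zero (e.summable_iff.mpr (summable_enstrophyTerm hu)) ?_
  rintro ⟨m, n⟩
  have he (p : (ℤ × ℤ) × (ℤ × ℤ)) : e p = (p.1 + p.2, p.1) := rfl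
  have hm : -(n + -(m + n)) = m := by abel
  have hm' : -(-(m + n) + n) = m := by abel
  have hn : -(-(m + n) + m) = n := by abel
  have hn' : -(m + -(m + n)) = n := by abel
  simp only [he, enstrophyTerm_add_eq hreal, triadRotation, Equiv.coe_fn_mk, Equiv.coe_fn_symm_mk,
    Prod.swap_prod_mk]
  simp only [hm, hm', hn, hn', add_comm n m]
  have hweight := congrArg (fun x : ℝ => (x : ℂ)) (triadWeight_sum_eq_zero m n)
  push_cast at hweight
  linear_combination (-(2 * Real.pi) ^ 3 * Complex.I * ((zeroExt u m / freqNorm m) *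
    (zeroExt u n / freqNorm n) * (zeroExt u (-(m + n)) / freqNorm (-(m + n))))) * hweight

lemma hasSum_lam_mul_inner_Bc_self (hu : FinH 2 u) (hreal : IsReal u) :
    HasSum (fun k => lam k * inner ℝ (u k) (Bc u u k)) 0 := by
  have hterm := summable_enstrophyTerm hu
  have hrow (k : Freq) : (∑' m, enstrophyTerm u (k.1, m)).re =
      lam k * inner ℝ (u k) (Bc u u k) := by
    simp only [enstrophyTerm]
    rw [tsum_mul_left, ← Bc_eq_tsum_transportTerm, zeroExt_coe, ← lam_eq_sq, mul_assoc,
      Complex.re_ofReal_mul, Complex.inner, mul_comm (Bc u u k)]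
  have hrows : HasSum (fun k => ∑' m, enstrophyTerm u (k, m)) 0 :=
    (tsum_enstrophyTerm hu hreal ▸ hterm.hasSum).prod_fiberwise fun k =>
      (hterm.prod_factor k).hasSum
  have hfreq : HasSum (fun k : Freq => ∑' m, enstrophyTerm u (k.1, m)) 0 := by
    refine (Subtype.val_injective.hasSum_iff fun k hk => ?_).mpr hrows
    have hk₀ : k = 0 := by_contra fun h => hk ⟨⟨k, h⟩, rfl⟩
    simp [hk₀, enstrophyTerm]
  simpa only [hrow, Complex.zero_re] using Complex.hasSum_re hfreq

end Enstrophy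

section Gronwall

variable {a b : ℝ} {y y' g h : ℝ → ℝ}

lemma le_exp_integral_mul_of_neg_mul_le_deriv (hab : a ≤ b) (hcont : ContinuousOn y (Icc a b))
    (hderiv : ∀ t ∈ Ioo a b, HasDerivAt y (y' t) t) (hpos : ∀ t ∈ Icc a b, 0 < y t)
    (hg : IntervalIntegrable g volume a b) (hle : ∀ t ∈ Ioo a b, -(g t * y t) ≤ y' t) :
    y a ≤ Real.exp (∫ t in a..b, g t) * y b := by
  have hlog : -Real.log (y b) - -Real.log (y a) ≤ ∫ t in a..b, g t := by
    refine intervalIntegral.sub_le_integral_of_hasDeriv_right_of_le hab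
      (hcont.log fun t ht => (hpos t ht).ne').neg (g' := fun t => -(y' t / y t))
      (fun t ht => ?_) ?_ fun t ht => ?_
    · exact ((hderiv t ht).log (hpos t (Ioo_subset_Icc_self ht)).ne').neg.hasDerivWithinAt
    · exact (intervalIntegrable_iff_integrableOn_Icc_of_le hab).mp hg
    · rw [← neg_div, div_le_iff₀ (hpos t (Ioo_subset_Icc_self ht))]
      exact neg_le.mp (hle t ht)
  have hexp : Real.log (y a) ≤ (∫ t in a..b, g t) + Real.log (y b) := by linarith
  rwa [← Real.exp_le_exp, Real.exp_add, Real.exp_log (hpos a (left_mem_Icc.mpr hab)),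
    Real.exp_log (hpos b (right_mem_Icc.mpr hab))] at hexp

lemma backward_gronwall (hab : a ≤ b) (hcont : ContinuousOn y (Icc a b))
    (hderiv : ∀ t ∈ Ioo a b, HasDerivAt y (y' t) t) (hy : ∀ t ∈ Icc a b, 0 ≤ y t)
    (hg₀ : ∀ t ∈ Icc a b, 0 ≤ g t) (hh₀ : ∀ t ∈ Icc a b, 0 ≤ h t)
    (hg : IntervalIntegrable g volume a b) (hh : IntervalIntegrable h volume a b)
    (hle : ∀ t ∈ Ioo a b, -(h t + g t * y t) ≤ y' t) :
    y a ≤ Real.exp (1 + ∫ t in a..b, g t) * (y b + ∫ t in a..b, h t) := by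
  set A := Real.exp (1 + ∫ t in a..b, g t)
  have hA : 0 < A := Real.exp_pos _
  have hI : 0 ≤ ∫ t in a..b, h t := intervalIntegral.integral_nonneg hab hh₀
  refine le_of_forall_pos_le_add fun ε hε => ?_
  -- Shifting `y` by `H > ∫ h` turns the source `h` into a damping rate `h / H` of integral `≤ 1`.
  set H := (∫ t in a..b, h t) + ε / A
  have hH : 0 < H := by positivity
  have hshift := le_exp_integral_mul_of_neg_mul_le_deriv hab (hcont.add continuousOn_const)
    (fun t ht => (hderiv t ht).add_const H) (fun t ht => add_pos_of_nonneg_of_pos (hy t ht) hH)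
    ((hh.div_const H).add hg) fun t ht => by
      refine (neg_le_neg ?_).trans (hle t ht)
      calc h t + g t * y t = h t / H * H + g t * y t := by rw [div_mul_cancel₀ _ hH.ne']
        _ ≤ (h t / H + g t) * (y t + H) := by
          have ht' := Ioo_subset_Icc_self ht
          have := mul_nonneg (div_nonneg (hh₀ t ht') hH.le) (hy t ht')
          have := mul_nonneg (hg₀ t ht') hH.le
          linarith
  have hrate : ∫ t in a..b, (h t / H + g t) ≤ 1 + ∫ t in a..b, g t := by
    rw [intervalIntegral.integral_add (hh.div_const H) hg, intervalIntegral.integral_div]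
    gcongr
    exact div_le_one_of_le₀ (le_add_of_nonneg_right (by positivity)) hH.le
  calc y a ≤ y a + H := le_add_of_nonneg_right hH.le
    _ ≤ A * (y b + H) := hshift.trans (mul_le_mul_of_nonneg_right (Real.exp_le_exp.mpr hrate)
        (add_nonneg (hy b (right_mem_Icc.mpr hab)) hH.le))
    _ = A * (y b + ∫ t in a..b, h t) + ε := by
      rw [← add_assoc, mul_add, mul_div_cancel₀ _ hA.ne']

lemma backward_gronwall_of_mem_Icc {t : ℝ} (ht : t ∈ Icc a b) (hcont : ContinuousOn y (Icc a b))
    (hderiv : ∀ t ∈ Ioo a b, HasDerivAt y (y' t) t) (hy : ∀ t ∈ Icc a b, 0 ≤ y t)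
    (hg₀ : ∀ t ∈ Icc a b, 0 ≤ g t) (hh₀ : ∀ t ∈ Icc a b, 0 ≤ h t)
    (hg : IntervalIntegrable g volume a b) (hh : IntervalIntegrable h volume a b)
    (hle : ∀ t ∈ Ioo a b, -(h t + g t * y t) ≤ y' t) :
    y a ≤ Real.exp (1 + ∫ t in a..b, g t) * (y t + ∫ t in a..b, h t) := by
  have hIcc : Icc a t ⊆ Icc a b := Icc_subset_Icc_right ht.2
  have hIoo : Ioo a t ⊆ Ioo a b := Ioo_subset_Ioo_right ht.2
  have huIcc : uIcc a t ⊆ uIcc a b := by rwa [uIcc_of_le ht.1, uIcc_of_le (ht.1.trans ht.2)]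
  have hmono {φ : ℝ → ℝ} (hφ₀ : ∀ s ∈ Icc a b, 0 ≤ φ s) (hφ : IntervalIntegrable φ volume a b) :
      ∫ s in a..t, φ s ≤ ∫ s in a..b, φ s :=
    intervalIntegral.integral_mono_interval le_rfl ht.1 ht.2
      ((ae_restrict_mem measurableSet_Ioc).mono fun s hs => hφ₀ s (Ioc_subset_Icc_self hs)) hφ
  refine (backward_gronwall ht.1 (hcont.mono hIcc) (fun s hs => hderiv s (hIoo hs))
    (fun s hs => hy s (hIcc hs)) (fun s hs => hg₀ s (hIcc hs)) (fun s hs => hh₀ s (hIcc hs))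
    (hg.mono_set huIcc) (hh.mono_set huIcc) fun s hs => hle s (hIoo hs)).trans ?_
  refine mul_le_mul (Real.exp_le_exp.mpr (add_le_add_right (hmono hg₀ hg) 1))
    (add_le_add_right (hmono hh₀ hh) _) (add_nonneg (hy t ht) ?_) (Real.exp_pos _).le
  exact intervalIntegral.integral_nonneg ht.1 fun s hs => hh₀ s (hIcc hs)

lemma backward_gronwall_integral {C : ℝ} (hab : a < b) (hC : 0 ≤ C)
    (hcont : ContinuousOn y (Icc a b)) (hderiv : ∀ t ∈ Ioo a b, HasDerivAt y (y' t) t)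
    (hy : ∀ t ∈ Icc a b, 0 ≤ y t) (hyh : ∀ t ∈ Icc a b, y t ≤ h t)
    (hg₀ : ∀ t ∈ Icc a b, 0 ≤ g t) (hg : IntervalIntegrable g volume a b)
    (hh : IntervalIntegrable h volume a b)
    (hle : ∀ t ∈ Ioo a b, -(C * h t + g t * y t) ≤ y' t) :
    y a ≤ Real.exp (1 + ∫ t in a..b, g t) * ((b - a)⁻¹ + C) * ∫ t in a..b, h t := by
  have hpointwise (t : ℝ) (ht : t ∈ Icc a b) :
      y a ≤ Real.exp (1 + ∫ t in a..b, g t) * (h t + C * ∫ t in a..b, h t) := by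
    have hbound := backward_gronwall_of_mem_Icc ht hcont hderiv hy hg₀
      (fun s hs => mul_nonneg hC ((hy s hs).trans (hyh s hs))) hg (hh.const_mul C) hle
    rw [intervalIntegral.integral_const_mul] at hbound
    refine hbound.trans ?_
    gcongr
    exact hyh t ht
  have haverage := intervalIntegral.integral_mono_on hab.le intervalIntegrable_const
    ((hh.add intervalIntegrable_const).const_mul _) hpointwise
  rw [intervalIntegral.integral_const_mul, intervalIntegral.integral_add hh
    intervalIntegrable_const, intervalIntegral.integral_const, intervalIntegral.integral_const,
    smul_eq_mul, smul_eq_mul, ← le_inv_mul_iff₀ (sub_pos.mpr hab)] at haverage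
  refine haverage.trans_eq ?_
  have hlength := (sub_pos.mpr hab).ne'
  field_simp

end Gronwall

section VectorField

variable {ν : ℝ}

lemma hInnerOn_neg_right (F : Finset Freq) (α : ℝ) (c d : Coef) :
    hInnerOn F α c (-d) = -hInnerOn F α c d := by
  simp only [hInnerOn, Pi.neg_apply, inner_neg_right, mul_neg, Finset.sum_neg_distrib]

lemma hInnerOn_sub_right (F : Finset Freq) (α : ℝ) (c d e : Coef) :
    hInnerOn F α c (d - e) = hInnerOn F α c d - hInnerOn F α c e := by
  rw [sub_eq_add_neg, hInnerOn_add_right, hInnerOn_neg_right, ← sub_eq_add_neg]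

lemma hInnerOn_smul_right (F : Finset Freq) (α : ℝ) (c : Coef) (r : ℝ) (d : Coef) :
    hInnerOn F α c (r • d) = r * hInnerOn F α c d := by
  simp only [hInnerOn, Pi.smul_apply, real_inner_smul_right, mul_left_comm _ r, Finset.mul_sum]

lemma lapC_sub (c d : Coef) : lapC (c - d) = lapC c - lapC d :=
  funext fun _ => mul_sub _ _ _

lemma hInnerOn_lapC (F : Finset Freq) (α : ℝ) (c : Coef) :
    hInnerOn F α c (lapC c) = -hSqOn F (α + 1) c := by
  rw [hInnerOn, hSqOn, ← Finset.sum_neg_distrib]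
  refine Finset.sum_congr rfl fun k _ => ?_
  rw [lapC, ← Complex.ofReal_neg, ← Complex.real_smul, real_inner_smul_right,
    real_inner_self_eq_norm_sq, Real.rpow_add_one (lam_pos k).ne']
  ring

/-- The vector field `f - νAu - B[u, u]` of the Navier–Stokes equations on `Ḣ_⋄`, where
`-A` is the Laplacian. -/
def nsField (ν : ℝ) (f u : Coef) : Coef := f + ν • lapC u - Bc u u

lemma two_mul_hInnerOn_nsField_le (hν : 0 < ν) (F : Finset Freq) (α : ℝ) (f u : Coef) :
    2 * hInnerOn F α u (nsField ν f u) ≤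
      ν⁻¹ * hSqOn F (α - 1) f - ν * hSqOn F (α + 1) u + 2 * |hInnerOn F α u (Bc u u)| := by
  rw [nsField, hInnerOn_sub_right, hInnerOn_add_right, hInnerOn_smul_right, hInnerOn_lapC]
  linarith [two_mul_hInnerOn_le F α u f hν, neg_abs_le (hInnerOn F α u (Bc u u))]

lemma hInnerOn_nsField_sub (F : Finset Freq) (α ν : ℝ) (f u v : Coef) :
    hInnerOn F α (u - v) (nsField ν f u - nsField ν f v) =
      -(ν * hSqOn F (α + 1) (u - v)) - hInnerOn F α (u - v) (Bc u u - Bc v v) := by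
  have hsub : nsField ν f u - nsField ν f v = ν • lapC (u - v) - (Bc u u - Bc v v) := by
    rw [nsField, nsField, lapC_sub, smul_sub]
    abel
  rw [hsub, hInnerOn_sub_right, hInnerOn_smul_right, hInnerOn_lapC, mul_neg]

end VectorField

section Trajectories

variable {α T : ℝ} {c : Coef} {u : ℝ → Coef}

lemma tendsto_hSqOn (hc : FinH α c) :
    Filter.Tendsto (fun F => hSqOn F α c) Filter.atTop (nhds (hSq α c)) :=
  hc.hasSum

lemma FinH.norm_le_hN (hc : FinH α c) (hα : 0 ≤ α) (k : Freq) : ‖c k‖ ≤ hN α c := by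
  refine Real.le_sqrt_of_sq_le (le_trans ?_ (hSq_mono hc hα))
  simpa [hSq] using (hc.mono hα).le_tsum k fun j _ => lam_rpow_mul_norm_sq_nonneg 0 c j

lemma ContH.continuousOn_coef (hcont : ContH α T u) (hα : 0 ≤ α)
    (hfin : ∀ t ∈ Icc 0 T, FinH α (u t)) (k : Freq) :
    ContinuousOn (fun t => u t k) (Icc 0 T) := by
  refine Metric.continuousOn_iff.mpr fun t ht ε hε => ?_
  obtain ⟨δ, hδ, hclose⟩ := hcont t ht ε hε
  refine ⟨δ, hδ, fun s hs hst => ?_⟩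
  rw [dist_eq_norm]
  exact (((hfin s hs).sub (hfin t ht)).norm_le_hN hα k).trans_lt (hclose s hs hst)

lemma ContH.exists_hSq_le (hcont : ContH α T u) (hfin : ∀ t ∈ Icc 0 T, FinH α (u t)) :
    ∃ K, ∀ t ∈ Icc 0 T, hSq α (u t) ≤ K := by
  refine isCompact_Icc.induction_on (p := fun s => ∃ K, ∀ t ∈ s, hSq α (u t) ≤ K)
    ⟨0, by simp⟩ (fun s s' hss' ⟨K, hK⟩ => ⟨K, fun t ht => hK t (hss' ht)⟩) ?_ fun t ht => ?_
  · rintro s s' ⟨K, hK⟩ ⟨K', hK'⟩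
    exact ⟨max K K', fun t ht => ht.elim (fun h => (hK t h).trans (le_max_left _ _))
      fun h => (hK' t h).trans (le_max_right _ _)⟩
  · obtain ⟨δ, hδ, hclose⟩ := hcont t ht 1 one_pos
    refine ⟨Icc 0 T ∩ Metric.ball t δ, inter_mem_nhdsWithin _ (Metric.ball_mem_nhds t hδ),
      2 * (1 + hSq α (u t)), fun s ⟨hs, hst⟩ => ?_⟩
    have hdiff : hSq α (u s - u t) ≤ 1 := by
      rw [← hN_sq]
      exact pow_le_one₀ (hN_nonneg _ _) (hclose s hs hst).le
    have hadd := hSq_add_le ((hfin s hs).sub (hfin t ht)) (hfin t ht)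
    rw [sub_add_cancel] at hadd
    linarith

lemma continuousOn_hSqOn {s : Set ℝ} (hu : ∀ k, ContinuousOn (fun t => u t k) s)
    (F : Finset Freq) (α : ℝ) : ContinuousOn (fun t => hSqOn F α (u t)) s :=
  continuousOn_finsetSum F fun k _ => continuousOn_const.mul ((hu k).norm.pow 2)

variable {X : Type*} [MeasurableSpace X] {μ : Measure X} {v w : X → Coef}

lemma aestronglyMeasurable_hSqOn (hv : ∀ k, AEStronglyMeasurable (fun x => v x k) μ)
    (F : Finset Freq) (α : ℝ) : AEStronglyMeasurable (fun x => hSqOn F α (v x)) μ :=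
  Finset.aestronglyMeasurable_fun_sum F fun k _ => ((hv k).norm.pow 2).const_mul _

lemma aestronglyMeasurable_hInnerOn (hv : ∀ k, AEStronglyMeasurable (fun x => v x k) μ)
    (hw : ∀ k, AEStronglyMeasurable (fun x => w x k) μ) (F : Finset Freq) (α : ℝ) :
    AEStronglyMeasurable (fun x => hInnerOn F α (v x) (w x)) μ :=
  Finset.aestronglyMeasurable_fun_sum F fun k _ => ((hv k).inner (hw k)).const_mul _

lemma aestronglyMeasurable_hSq (hv : ∀ k, AEStronglyMeasurable (fun x => v x k) μ)
    (hfin : ∀ᵐ x ∂μ, FinH α (v x)) : AEStronglyMeasurable (fun x => hSq α (v x)) μ :=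
  aestronglyMeasurable_of_tendsto_ae Filter.atTop (fun F => aestronglyMeasurable_hSqOn hv F α)
    (hfin.mono fun _ => tendsto_hSqOn)

end Trajectories

section Solutions

variable {ν T : ℝ} {f θ : Coef} {u : ℝ → Coef}

namespace IsNSSol

lemma hasDerivAt (hu : IsNSSol ν f T θ u) {t : ℝ} (ht : t ∈ Ioc 0 T) (k : Freq) :
    HasDerivAt (fun s => u s k) (nsField ν f (u t) k) t := by
  refine (hu.deriv k t ht).congr_deriv ?_
  simp only [nsField, lapC, Pi.sub_apply, Pi.add_apply, Pi.smul_apply, Complex.real_smul,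
    Complex.ofReal_mul]
  ring

lemma finH_two (hu : IsNSSol ν f T θ u) {t : ℝ} (ht : t ∈ Ioc 0 T) : FinH 2 (u t) :=
  (hu.memL2H2.1 t ht).2

lemma finH_one (hu : IsNSSol ν f T θ u) (hθ : FinH 1 θ) {t : ℝ} (ht : t ∈ Icc 0 T) :
    FinH 1 (u t) := by
  rcases ht.1.eq_or_lt with rfl | h
  · rwa [hu.init]
  · exact (hu.finH_two ⟨h, ht.2⟩).mono one_le_two

lemma continuousOn_coef (hu : IsNSSol ν f T θ u) (hθ : FinH 1 θ) (k : Freq) :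
    ContinuousOn (fun t => u t k) (Icc 0 T) :=
  hu.contH1.continuousOn_coef zero_le_one (fun _ => hu.finH_one hθ) k

lemma aestronglyMeasurable_coef (hu : IsNSSol ν f T θ u) (k : Freq) :
    AEStronglyMeasurable (fun t => u t k) (volume.restrict (Ioc 0 T)) :=
  ContinuousOn.aestronglyMeasurable
    (fun _ ht => (hu.hasDerivAt ht k).continuousAt.continuousWithinAt) measurableSet_Ioc

-- Expressed by the equation, the nonlinearity inherits its measurability from the time derivative.
lemma aestronglyMeasurable_Bc (hu : IsNSSol ν f T θ u) (k : Freq) :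
    AEStronglyMeasurable (fun t => Bc (u t) (u t) k) (volume.restrict (Ioc 0 T)) := by
  have hmeas : AEStronglyMeasurable
      (fun t => f k - ((ν * lam k : ℝ) : ℂ) * u t k - _root_.deriv (fun s => u s k) t)
      (volume.restrict (Ioc 0 T)) :=
    (aestronglyMeasurable_const.sub ((hu.aestronglyMeasurable_coef k).const_mul _)).sub
      (stronglyMeasurable_deriv (fun s => u s k)).aestronglyMeasurable
  refine hmeas.congr ((ae_restrict_mem measurableSet_Ioc).mono fun t ht => ?_)
  simp only [(hu.deriv k t ht).deriv, sub_sub_cancel]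

lemma intervalIntegrable_hSq_two (hT : 0 ≤ T) (hu : IsNSSol ν f T θ u) :
    IntervalIntegrable (fun t => hSq 2 (u t)) volume 0 T :=
  (intervalIntegrable_iff_integrableOn_Ioc_of_le hT).mpr hu.memL2H2.2

lemma intervalIntegrable_hSq_zero_sub {ν₀ : ℝ} {f₀ θ₀ : Coef} {u₀ : ℝ → Coef} (hT : 0 ≤ T)
    (hu : IsNSSol ν f T θ u) (hu₀ : IsNSSol ν₀ f₀ T θ₀ u₀) :
    IntervalIntegrable (fun t => hSq 0 (u t - u₀ t)) volume 0 T := by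
  have hmem := ae_restrict_mem (μ := volume) (measurableSet_Ioc (a := (0 : ℝ)) (b := T))
  refine (intervalIntegrable_iff_integrableOn_Ioc_of_le hT).mpr <|
    ((hu.memL2H2.2.add hu₀.memL2H2.2).const_mul 2).mono' (aestronglyMeasurable_hSq
      (fun k => (hu.aestronglyMeasurable_coef k).sub (hu₀.aestronglyMeasurable_coef k)) ?_) ?_
  · filter_upwards [hmem] with t ht
    exact ((hu.finH_two ht).sub (hu₀.finH_two ht)).mono zero_le_two
  · filter_upwards [hmem] with t ht
    rw [Real.norm_of_nonneg (hSq_nonneg _ _)]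
    exact (hSq_mono ((hu.finH_two ht).sub (hu₀.finH_two ht)) zero_le_two).trans
      (hSq_sub_le (hu.finH_two ht) (hu₀.finH_two ht))

end IsNSSol

end Solutions

section EnstrophyBalance

variable {ν T : ℝ} {f θ : Coef} {u : ℝ → Coef}

lemma abs_hInnerOn_one_Bc_self_le {K : ℝ} {c : Coef} (hc : FinH 2 c) (hK : hSq 1 c ≤ K)
    (F : Finset Freq) :
    |hInnerOn F 1 c (Bc c c)| ≤ √(wienerConst 2) * √K * hSq 2 c := by
  have hwiener : wienerNorm c ≤ √(wienerConst 2) * √(hSq 2 c) := by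
    rw [← Real.sqrt_mul (wienerConst_nonneg 2)]
    exact Real.le_sqrt_of_sq_le (hc.wienerNorm_sq_le one_lt_two)
  have htrunc : hSqOn F (2 * 1) c ≤ hSq 2 c := by
    rw [mul_one]
    exact hSqOn_le_hSq F hc
  calc |hInnerOn F 1 c (Bc c c)|
      ≤ wienerNorm c * (√(hSq 1 c) * √(hSqOn F (2 * 1) c)) :=
        abs_hInnerOn_Bc_le (hc.summable_norm one_lt_two) (hc.mono one_le_two) F 1 c
    _ ≤ √(wienerConst 2) * √(hSq 2 c) * (√K * √(hSq 2 c)) := by gcongr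
    _ = √(wienerConst 2) * √K * hSq 2 c := by
        linear_combination √(wienerConst 2) * √K * Real.mul_self_sqrt (hSq_nonneg 2 c)

lemma tendsto_hInnerOn_one_Bc_self {c : Coef} (hc : FinH 2 c) (hreal : IsReal c) :
    Filter.Tendsto (fun F => hInnerOn F 1 c (Bc c c)) Filter.atTop (nhds 0) := by
  simp only [hInnerOn, Real.rpow_one]
  exact hasSum_lam_mul_inner_Bc_self hc hreal

namespace IsNSSol

lemma exists_abs_hInnerOn_Bc_le (hu : IsNSSol ν f T θ u) (hθ : FinH 1 θ) :
    ∃ K, ∀ F, ∀ t ∈ Ioc 0 T, |hInnerOn F 1 (u t) (Bc (u t) (u t))| ≤ K * hSq 2 (u t) := by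
  obtain ⟨K, hK⟩ := hu.contH1.exists_hSq_le fun _ => hu.finH_one hθ
  exact ⟨√(wienerConst 2) * √K, fun F t ht =>
    abs_hInnerOn_one_Bc_self_le (hu.finH_two ht) (hK t (Ioc_subset_Icc_self ht)) F⟩

lemma aestronglyMeasurable_abs_hInnerOn_Bc (hu : IsNSSol ν f T θ u) (F : Finset Freq) :
    AEStronglyMeasurable (fun t => |hInnerOn F 1 (u t) (Bc (u t) (u t))|)
      (volume.restrict (Ioc 0 T)) :=
  (aestronglyMeasurable_hInnerOn hu.aestronglyMeasurable_coef hu.aestronglyMeasurable_Bc F 1).norm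

lemma intervalIntegrable_abs_hInnerOn_Bc (hT : 0 ≤ T) (hu : IsNSSol ν f T θ u) (hθ : FinH 1 θ)
    (F : Finset Freq) :
    IntervalIntegrable (fun t => |hInnerOn F 1 (u t) (Bc (u t) (u t))|) volume 0 T := by
  obtain ⟨K, hK⟩ := hu.exists_abs_hInnerOn_Bc_le hθ
  refine ((hu.intervalIntegrable_hSq_two hT).const_mul K).mono_fun' ?_ ?_ <;> rw [uIoc_of_le hT]
  · exact hu.aestronglyMeasurable_abs_hInnerOn_Bc F
  · refine (ae_restrict_mem measurableSet_Ioc).mono fun t ht => ?_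
    simpa only [Real.norm_eq_abs, abs_abs] using hK F t ht

lemma tendsto_integral_abs_hInnerOn_Bc (hT : 0 ≤ T) (hu : IsNSSol ν f T θ u) (hθ : FinH 1 θ) :
    Filter.Tendsto (fun F => ∫ t in (0 : ℝ)..T, |hInnerOn F 1 (u t) (Bc (u t) (u t))|)
      Filter.atTop (nhds 0) := by
  obtain ⟨K, hK⟩ := hu.exists_abs_hInnerOn_Bc_le hθ
  have hlim := intervalIntegral.tendsto_integral_filter_of_dominated_convergence
    (l := Filter.atTop) (f := fun _ => 0) (fun t => K * hSq 2 (u t))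
    (F := fun F t => |hInnerOn F 1 (u t) (Bc (u t) (u t))|) (.of_forall fun F => ?_)
    (.of_forall fun F => .of_forall fun t ht => ?_)
    ((hu.intervalIntegrable_hSq_two hT).const_mul K) (.of_forall fun t ht => ?_)
  · simpa only [intervalIntegral.integral_zero] using hlim
  · rw [uIoc_of_le hT]
    exact hu.aestronglyMeasurable_abs_hInnerOn_Bc F
  all_goals rw [uIoc_of_le hT] at ht
  · simpa only [Real.norm_eq_abs, abs_abs] using hK F t ht
  · simpa only [abs_zero] using (tendsto_hInnerOn_one_Bc_self (hu.finH_two ht)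
      (hu.real t (Ioc_subset_Icc_self ht))).abs

lemma norm_hSqOn_two_le (hu : IsNSSol ν f T θ u) (F : Finset Freq) {t : ℝ} (ht : t ∈ Ioc 0 T) :
    ‖hSqOn F 2 (u t)‖ ≤ hSq 2 (u t) := by
  rw [Real.norm_of_nonneg (hSqOn_nonneg F 2 _)]
  exact hSqOn_le_hSq F (hu.finH_two ht)

lemma intervalIntegrable_hSqOn_two (hT : 0 ≤ T) (hu : IsNSSol ν f T θ u) (F : Finset Freq) :
    IntervalIntegrable (fun t => hSqOn F 2 (u t)) volume 0 T := by
  refine (hu.intervalIntegrable_hSq_two hT).mono_fun' ?_ ?_ <;> rw [uIoc_of_le hT]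
  · exact aestronglyMeasurable_hSqOn hu.aestronglyMeasurable_coef F 2
  · exact (ae_restrict_mem measurableSet_Ioc).mono fun t => hu.norm_hSqOn_two_le F

lemma tendsto_integral_hSqOn_two (hT : 0 ≤ T) (hu : IsNSSol ν f T θ u) :
    Filter.Tendsto (fun F => ∫ t in (0 : ℝ)..T, hSqOn F 2 (u t)) Filter.atTop
      (nhds (∫ t in (0 : ℝ)..T, hSq 2 (u t))) := by
  refine intervalIntegral.tendsto_integral_filter_of_dominated_convergence _
    (.of_forall fun F => ?_) (.of_forall fun F => .of_forall fun t ht => ?_)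
    (hu.intervalIntegrable_hSq_two hT) (.of_forall fun t ht => ?_)
  · rw [uIoc_of_le hT]
    exact aestronglyMeasurable_hSqOn hu.aestronglyMeasurable_coef F 2
  all_goals rw [uIoc_of_le hT] at ht
  · exact hu.norm_hSqOn_two_le F ht
  · exact tendsto_hSqOn (hu.finH_two ht)

lemma mul_integral_hSqOn_two_le (hT : 0 ≤ T) (hν : 0 < ν) (hf : FinH 0 f) (hθ : FinH 1 θ)
    (hu : IsNSSol ν f T θ u) (F : Finset Freq) :
    ν * ∫ t in (0 : ℝ)..T, hSqOn F 2 (u t) ≤ hSq 1 θ + T * (ν⁻¹ * hSq 0 f) +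
      2 * ∫ t in (0 : ℝ)..T, |hInnerOn F 1 (u t) (Bc (u t) (u t))| := by
  have hdiss := (hu.intervalIntegrable_hSqOn_two hT F).const_mul ν
  have hflux := (hu.intervalIntegrable_abs_hInnerOn_Bc hT hθ F).const_mul 2
  have hgrowth := intervalIntegral.sub_le_integral_of_hasDeriv_right_of_le hT
    (continuousOn_hSqOn (hu.continuousOn_coef hθ) F 1)
    (fun t ht => (hasDerivAt_hSqOn
      (fun k _ => hu.hasDerivAt (Ioo_subset_Ioc_self ht) k) 1).hasDerivWithinAt)
    ((intervalIntegrable_iff_integrableOn_Icc_of_le hT).mp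
      ((intervalIntegrable_const (c := ν⁻¹ * hSq 0 f).sub hdiss).add hflux))
    fun t _ => ?_
  · rw [intervalIntegral.integral_add (intervalIntegrable_const.sub hdiss) hflux,
      intervalIntegral.integral_sub intervalIntegrable_const hdiss,
      intervalIntegral.integral_const, intervalIntegral.integral_const_mul,
      intervalIntegral.integral_const_mul, sub_zero, smul_eq_mul, hu.init] at hgrowth
    linarith [hSqOn_nonneg F 1 (u T), hSqOn_le_hSq F hθ]
  · have hrate := two_mul_hInnerOn_nsField_le hν F 1 f (u t)
    have hforce : ν⁻¹ * hSqOn F 0 f ≤ ν⁻¹ * hSq 0 f := by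
      gcongr
      exact hSqOn_le_hSq F hf
    rw [sub_self, one_add_one_eq_two] at hrate
    linarith

lemma mul_integral_hSq_two_le (hT : 0 ≤ T) (hν : 0 < ν) (hf : FinH 0 f) (hθ : FinH 1 θ)
    (hu : IsNSSol ν f T θ u) :
    ν * ∫ t in (0 : ℝ)..T, hSq 2 (u t) ≤ hSq 1 θ + T * (ν⁻¹ * hSq 0 f) := by
  have hlim := le_of_tendsto_of_tendsto' ((hu.tendsto_integral_hSqOn_two hT).const_mul ν)
    (((hu.tendsto_integral_abs_hInnerOn_Bc hT hθ).const_mul 2).const_add _)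
    (hu.mul_integral_hSqOn_two_le hT hν hf hθ)
  rwa [mul_zero, add_zero] at hlim

end IsNSSol

end EnstrophyBalance

section Stability

variable {ν T α : ℝ} {f θ θ₀ : Coef} {u u₀ : ℝ → Coef}

lemma two_mul_abs_hInnerOn_neg_one_Bc_self_sub_le {u v : Coef} (hα : 1 < α) (hu : FinH α u)
    (hv : FinH α v) (F : Finset Freq) :
    2 * |hInnerOn F (-1) (u - v) (Bc u u - Bc v v)| ≤ hSq 0 (u - v) +
      2 * wienerConst α * (hSq α u + hSq α v) * hSqOn F (-1) (u - v) := by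
  have htrilinear := abs_hInnerOn_neg_one_Bc_self_sub_le (hu.summable_norm hα)
    (hv.summable_norm hα) F
  have hwiener : (wienerNorm u + wienerNorm v) ^ 2 ≤
      2 * wienerConst α * (hSq α u + hSq α v) := by
    linarith [add_sq_le (a := wienerNorm u) (b := wienerNorm v), hu.wienerNorm_sq_le hα,
      hv.wienerNorm_sq_le hα]
  have hyoung := two_mul_le_add_sq √(hSq 0 (u - v))
    ((wienerNorm u + wienerNorm v) * √(hSqOn F (-1) (u - v)))
  rw [mul_pow, Real.sq_sqrt (hSq_nonneg 0 _), Real.sq_sqrt (hSqOn_nonneg F (-1) _)] at hyoung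
  linarith [mul_le_mul_of_nonneg_right hwiener (hSqOn_nonneg F (-1) (u - v))]

lemma neg_le_two_mul_hInnerOn_nsField_sub {u v : Coef} (hν : 0 ≤ ν) (hα : 1 < α)
    (hu : FinH α u) (hv : FinH α v) (f : Coef) (F : Finset Freq) :
    -((2 * ν + 1) * hSq 0 (u - v) +
        2 * wienerConst α * (hSq α u + hSq α v) * hSqOn F (-1) (u - v)) ≤
      2 * hInnerOn F (-1) (u - v) (nsField ν f u - nsField ν f v) := by
  have hnonlinear := two_mul_abs_hInnerOn_neg_one_Bc_self_sub_le hα hu hv F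
  have hdiss : ν * hSqOn F 0 (u - v) ≤ ν * hSq 0 (u - v) :=
    mul_le_mul_of_nonneg_left (hSqOn_le_hSq F ((hu.sub hv).mono (by linarith))) hν
  rw [hInnerOn_nsField_sub, neg_add_cancel]
  linarith [le_abs_self (hInnerOn F (-1) (u - v) (Bc u u - Bc v v))]

lemma IsNSSol.integral_hSq_two_add_le {M B : ℝ} (hT : 0 ≤ T) (hν : 0 < ν) (hf : FinH 0 f)
    (hM : hN 0 f ≤ M) (hθ : FinH 1 θ) (hθ₀ : FinH 1 θ₀) (hB : hN 1 θ + hN 1 θ₀ ≤ B)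
    (hu : IsNSSol ν f T θ u) (hu₀ : IsNSSol ν f T θ₀ u₀) :
    ∫ t in (0 : ℝ)..T, (hSq 2 (u t) + hSq 2 (u₀ t)) ≤
      ν⁻¹ * (B ^ 2 + 2 * (T * (ν⁻¹ * M ^ 2))) := by
  have hinit : hSq 1 θ + hSq 1 θ₀ ≤ B ^ 2 := by
    rw [← hN_sq, ← hN_sq]
    have hθ_nonneg := hN_nonneg 1 θ
    have hθ₀_nonneg := hN_nonneg 1 θ₀
    calc hN 1 θ ^ 2 + hN 1 θ₀ ^ 2 ≤ (hN 1 θ + hN 1 θ₀) ^ 2 :=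
          pow_add_pow_le hθ_nonneg hθ₀_nonneg two_ne_zero
      _ ≤ B ^ 2 := by gcongr
  have hforce : T * (ν⁻¹ * hSq 0 f) ≤ T * (ν⁻¹ * M ^ 2) := by
    rw [← hN_sq]
    have hf_nonneg := hN_nonneg 0 f
    gcongr
  rw [intervalIntegral.integral_add (hu.intervalIntegrable_hSq_two hT)
    (hu₀.intervalIntegrable_hSq_two hT), le_inv_mul_iff₀ hν]
  linarith [hu.mul_integral_hSq_two_le hT hν hf hθ, hu₀.mul_integral_hSq_two_le hT hν hf hθ₀]

lemma IsNSSol.hSqOn_neg_one_sub_le (hT : 0 < T) (hν : 0 ≤ ν) (hθ : FinH 1 θ) (hθ₀ : FinH 1 θ₀)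
    (hu : IsNSSol ν f T θ u) (hu₀ : IsNSSol ν f T θ₀ u₀) (F : Finset Freq) :
    hSqOn F (-1) (θ - θ₀) ≤
      Real.exp (1 + 2 * wienerConst 2 * ∫ t in (0 : ℝ)..T, (hSq 2 (u t) + hSq 2 (u₀ t))) *
        (T⁻¹ + (2 * ν + 1)) * ∫ t in (0 : ℝ)..T, hSq 0 (u t - u₀ t) := by
  have hK : 0 ≤ 2 * wienerConst 2 := mul_nonneg zero_le_two (wienerConst_nonneg 2)
  have hfin (t : ℝ) (ht : t ∈ Icc 0 T) : FinH 0 (u t - u₀ t) :=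
    ((hu.finH_one hθ ht).sub (hu₀.finH_one hθ₀ ht)).mono zero_le_one
  have hgronwall := backward_gronwall_integral
    (y := fun t => hSqOn F (-1) (u t - u₀ t)) (h := fun t => hSq 0 (u t - u₀ t))
    (g := fun t => 2 * wienerConst 2 * (hSq 2 (u t) + hSq 2 (u₀ t))) (C := 2 * ν + 1)
    hT (by positivity)
    (continuousOn_hSqOn (fun k => (hu.continuousOn_coef hθ k).sub (hu₀.continuousOn_coef hθ₀ k))
      F (-1))
    (fun t ht => hasDerivAt_hSqOn (fun k _ => (hu.hasDerivAt (Ioo_subset_Ioc_self ht) k).sub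
      (hu₀.hasDerivAt (Ioo_subset_Ioc_self ht) k)) (-1))
    (fun _ _ => hSqOn_nonneg F (-1) _)
    (fun t ht => (hSqOn_le_hSq F ((hfin t ht).mono (by norm_num))).trans
      (hSq_mono (hfin t ht) (by norm_num)))
    (fun _ _ => mul_nonneg hK (add_nonneg (hSq_nonneg 2 _) (hSq_nonneg 2 _)))
    (((hu.intervalIntegrable_hSq_two hT.le).add
      (hu₀.intervalIntegrable_hSq_two hT.le)).const_mul _)
    (hu.intervalIntegrable_hSq_zero_sub hT.le hu₀)
    (fun t ht => neg_le_two_mul_hInnerOn_nsField_sub hν one_lt_two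
      (hu.finH_two (Ioo_subset_Ioc_self ht)) (hu₀.finH_two (Ioo_subset_Ioc_self ht)) f F)
  rwa [intervalIntegral.integral_const_mul, sub_zero, hu.init, hu₀.init] at hgronwall

end Stability

theorem statement4_general (T ν : ℝ) (hT : 0 < T) (hν : 0 < ν) (M B : ℝ) :
    ∃ C : ℝ, 0 < C ∧
      ∀ (f θ θ₀ : Coef) (u u₀ : ℝ → Coef), FinH 0 f → hN 0 f ≤ M →
        FinH 1 θ → FinH 1 θ₀ → hN 1 θ + hN 1 θ₀ ≤ B →
        IsNSSol ν f T θ u → IsNSSol ν f T θ₀ u₀ →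
          hSq (-1) (θ - θ₀) ≤ C * ∫ t in (0:ℝ)..T, hSq 0 (u t - u₀ t) := by
  refine ⟨Real.exp (1 + 2 * wienerConst 2 * (ν⁻¹ * (B ^ 2 + 2 * (T * (ν⁻¹ * M ^ 2))))) *
    (T⁻¹ + (2 * ν + 1)), by positivity, fun f θ θ₀ u u₀ hf hM hθ hθ₀ hB hu hu₀ =>
      hSq_le_of_hSqOn_le fun F => (hu.hSqOn_neg_one_sub_le hT hν.le hθ hθ₀ hu₀ F).trans ?_⟩
  have hI : 0 ≤ ∫ t in (0 : ℝ)..T, hSq 0 (u t - u₀ t) :=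
    intervalIntegral.integral_nonneg hT.le fun t _ => hSq_nonneg 0 _
  have hK := wienerConst_nonneg 2
  gcongr
  exact hu.integral_hSq_two_add_le hT.le hν hf hM hθ hθ₀ hB hu₀

/-- Proposition `PropStabForward`. Stability
(inverse-continuity) estimate for the Navier–Stokes forward map: for
`f ∈ Ḣ¹_⋄`, `T>0`, `ν>0`, `B>0` there is `C = C(ν,T,‖f‖_{Ḣ¹},B) > 0` such
that for all `θ, θ₀ ∈ Ḣ²_⋄` with `‖θ‖_{Ḣ²} + ‖θ₀‖_{Ḣ²} ≤ B`,
`‖θ − θ₀‖²_{Ḣ^{−1}} ≤ C ∫₀ᵀ ‖u_θ(t) − u_{θ₀}(t)‖²_{L²} dt`. -/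
theorem statement4 (T ν : ℝ) (hT : 0 < T) (hν : 0 < ν)
    (f : Coef) (hf : MemH 1 f) (B : ℝ) (hB : 0 < B) :
    ∃ C : ℝ, 0 < C ∧
      ∀ (θ θ₀ : Coef) (u u₀ : ℝ → Coef),
        MemH 2 θ → MemH 2 θ₀ → hN 2 θ + hN 2 θ₀ ≤ B →
        IsNSSol ν f T θ u → IsNSSol ν f T θ₀ u₀ →
          hSq (-1) (θ - θ₀) ≤ C * ∫ t in (0:ℝ)..T, hSq 0 (u t - u₀ t) := by
  have ⟨C, hC, hstab⟩ := statement4_general T ν hT hν (hN 0 f) B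
  exact ⟨C, hC, fun θ θ₀ u u₀ hθ hθ₀ hBB => hstab f θ θ₀ u u₀ (hf.2.mono zero_le_one) le_rfl
    (hθ.2.mono one_le_two) (hθ₀.2.mono one_le_two)
    ((add_le_add (hN_mono hθ.2 one_le_two) (hN_mono hθ₀.2 one_le_two)).trans hBB)⟩

end NS2D
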